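/- Each P_{2i,j} (1 ≤ i ≤ n²/2, j ∈ {0,1}) is an indecomposable projective left u-module of k-dimension 2n², the modules P_{2i,j} and P_{2i',j'} are isomorphic only if (i,j) = (i',j'), and every finite-dimensional indecomposable projective left u-module is isomorphic to some P_{2i,j}; in particular u has exactly n² isomorphism classes of indecomposable projective modules, all of dimension 2n². -/

import Mathlib

noncomputable section

open scoped TensorProduct

namespace QFL

/-- The defining relations of the quasi-Frobenius-Lusztig kernel `ũ_q(sl₂)`,
on the free algebra on four generators `K = ι 0`, `K̂ = ι 1`, `E = ι 2`, `F = ι 3`. -/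
inductive Rel (k : Type) [Field k] (n : ℕ) (q : k) :
    FreeAlgebra k (Fin 4) → FreeAlgebra k (Fin 4) → Prop
  | Kord : Rel k n q (FreeAlgebra.ι k (0 : Fin 4) ^ n) 1
  | Khord : Rel k n q (FreeAlgebra.ι k (1 : Fin 4) ^ n)
      ((FreeAlgebra.ι k (0 : Fin 4) ^ (n - 1)) ^ 2)
  | KKh : Rel k n q (FreeAlgebra.ι k (0 : Fin 4) * FreeAlgebra.ι k (1 : Fin 4))
      (FreeAlgebra.ι k (1 : Fin 4) * FreeAlgebra.ι k (0 : Fin 4))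
  | KE : Rel k n q
      (FreeAlgebra.ι k (0 : Fin 4) * FreeAlgebra.ι k (2 : Fin 4) *
        FreeAlgebra.ι k (0 : Fin 4) ^ (n - 1))
      (q ^ n • FreeAlgebra.ι k (2 : Fin 4))
  | KF : Rel k n q
      (FreeAlgebra.ι k (0 : Fin 4) * FreeAlgebra.ι k (3 : Fin 4) *
        FreeAlgebra.ι k (0 : Fin 4) ^ (n - 1))
      ((q ^ n)⁻¹ • FreeAlgebra.ι k (3 : Fin 4))
  | KhE : Rel k n q
      (FreeAlgebra.ι k (1 : Fin 4) * FreeAlgebra.ι k (2 : Fin 4) *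
        FreeAlgebra.ι k (1 : Fin 4) ^ (n ^ 2 - 1))
      ((q ^ n * (q ^ 2)⁻¹) • FreeAlgebra.ι k (2 : Fin 4))
  | KhF : Rel k n q
      (FreeAlgebra.ι k (1 : Fin 4) * FreeAlgebra.ι k (3 : Fin 4) *
        FreeAlgebra.ι k (1 : Fin 4) ^ (n ^ 2 - 1))
      (((q ^ n)⁻¹ * q ^ 2) • FreeAlgebra.ι k (3 : Fin 4))
  | Enil : Rel k n q (FreeAlgebra.ι k (2 : Fin 4) ^ n ^ 2) 0
  | Fnil : Rel k n q (FreeAlgebra.ι k (3 : Fin 4) ^ n ^ 2) 0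
  | EF : Rel k n q
      (FreeAlgebra.ι k (3 : Fin 4) * FreeAlgebra.ι k (2 : Fin 4) -
        q⁻¹ • (FreeAlgebra.ι k (2 : Fin 4) * FreeAlgebra.ι k (3 : Fin 4)))
      (1 - FreeAlgebra.ι k (0 : Fin 4) ^ (n - 1) * FreeAlgebra.ι k (1 : Fin 4))

/-- The algebra `ũ_q(sl₂)` as the quotient of the free algebra by the defining relations. -/
abbrev U (k : Type) [Field k] (n : ℕ) (q : k) := RingQuot (Rel k n q)

variable (k : Type) [Field k] (n : ℕ) (q : k)

def K : U k n q := RingQuot.mkAlgHom k (Rel k n q) (FreeAlgebra.ι k (0 : Fin 4))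
def Kh : U k n q := RingQuot.mkAlgHom k (Rel k n q) (FreeAlgebra.ι k (1 : Fin 4))
def E : U k n q := RingQuot.mkAlgHom k (Rel k n q) (FreeAlgebra.ι k (2 : Fin 4))
def F : U k n q := RingQuot.mkAlgHom k (Rel k n q) (FreeAlgebra.ι k (3 : Fin 4))

/-- `K⁻¹ = K^(n-1)`. -/
def Kinv : U k n q := K k n q ^ (n - 1)
/-- `K̂⁻¹ = K̂^(n²-1)`. -/
def Khinv : U k n q := Kh k n q ^ (n ^ 2 - 1)

/-- `φ_{2i} = (2/n²) Σ_{t<n²/2} q^{-2it} (K⁻¹K̂)^t`. -/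
def phi (i : ℕ) : U k n q :=
  ((n ^ 2 : k)⁻¹ * 2) • ∑ t ∈ Finset.range (n ^ 2 / 2),
    (q⁻¹ ^ (2 * i * t)) • (Kinv k n q * Kh k n q) ^ t

/-- `𝟙₀ = (1/2)(1 + KK̂^(n/2))` and `𝟙₁ = (1/2)(1 - KK̂^(n/2))`. -/
def oneJ (j : ℕ) : U k n q :=
  if j = 0 then (2 : k)⁻¹ • (1 + K k n q * Kh k n q ^ (n / 2))
  else (2 : k)⁻¹ • (1 - K k n q * Kh k n q ^ (n / 2))

/-- The idempotent `e_{2i,j} = φ_{2i} 𝟙_j`. -/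
def eIdem (i j : ℕ) : U k n q := phi k n q i * oneJ k n q j

/-- `α_{2i,j} = F^(n²-1) e_{2i,j}`. -/
def alpha (i j : ℕ) : U k n q := F k n q ^ (n ^ 2 - 1) * eIdem k n q i j

/-- `β_{2i,j} = E^(2i-2) α_{2i,j}`. -/
def beta (i j : ℕ) : U k n q := E k n q ^ (2 * i - 2) * alpha k n q i j

/-- The Gaussian number `s_q = 1 + q + ⋯ + q^(s-1)`. -/
def gauss (x : k) (s : ℕ) : k := ∑ t ∈ Finset.range s, x ^ t

/-- The span of the PBW-type monomials `F^a K^c K̂^d E^b` with `a ≤ n²-2`, `b ≤ n²-1`,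
`c ≤ n-1`, `d ≤ n²-1`. -/
def pbw : Submodule k (U k n q) :=
  Submodule.span k {x | ∃ a b c d : ℕ, a ≤ n ^ 2 - 2 ∧ b ≤ n ^ 2 - 1 ∧ c ≤ n - 1 ∧
    d ≤ n ^ 2 - 1 ∧ x = F k n q ^ a * K k n q ^ c * Kh k n q ^ d * E k n q ^ b}

/-- `γ_{2i,j}`: the unique element of the PBW span with `F·γ = β_{2i,j}`. -/
def gam (i j : ℕ) : U k n q :=
  @dite _ (∃! x, x ∈ pbw k n q ∧ F k n q * x = beta k n q i j)
    (Classical.propDecidable _) (fun h => h.choose) (fun _ => 0)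

/-- The left ideal `P_{2i,j} = u·γ_{2i,j}`. -/
def P (i j : ℕ) : Submodule (U k n q) (U k n q) :=
  Submodule.span (U k n q) {gam k n q i j}

/-- `S_{2i,j} = Soc(P_{2i,j})`, the sum of all simple submodules of `P_{2i,j}`. -/
def S (i j : ℕ) : Submodule (U k n q) (U k n q) :=
  sSup {N : Submodule (U k n q) (U k n q) | N ≤ P k n q i j ∧ IsSimpleModule (U k n q) N}

end QFL

namespace QFL

/-- A module is indecomposable if it is nonzero and admits no decomposition into two
nonzero complementary submodules. -/
def IsIndecomposable (R M : Type*) [Ring R] [AddCommGroup M] [Module R M] : Prop :=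
  Nontrivial M ∧ ∀ N₁ N₂ : Submodule R M, IsCompl N₁ N₂ → N₁ = ⊥ ∨ N₂ = ⊥

end QFL


namespace QFL

variable {k : Type} [Field k] {n : ℕ} {q : k}

/-- Standing hypotheses. -/
structure Hyp (n : ℕ) (q : k) : Prop where
  hn : 0 < n
  h4 : 4 ∣ n
  hq : IsPrimitiveRoot q (n ^ 2)

local notation "gK" => K k n q
local notation "gH" => Kh k n q
local notation "gE" => E k n q
local notation "gF" => F k n q

/-- `L = K⁻¹ K̂`. -/
def gL (k : Type) [Field k] (n : ℕ) (q : k) : U k n q := Kinv k n q * Kh k n q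
/-- `T = K K̂^(n/2)`. -/
def gT (k : Type) [Field k] (n : ℕ) (q : k) : U k n q := K k n q * Kh k n q ^ (n / 2)

local notation "L" => gL k n q
local notation "T" => gT k n q

lemma rel_K : gK ^ n = 1 := by
  have := RingQuot.mkAlgHom_rel k (Rel.Kord (k := k) (n := n) (q := q))
  simpa [K] using this

lemma rel_Kh : gH ^ n = (gK ^ (n - 1)) ^ 2 := by
  have := RingQuot.mkAlgHom_rel k (Rel.Khord (k := k) (n := n) (q := q))
  rw [map_pow, map_pow, map_pow] at this; exact this

lemma rel_comm : gK * gH = gH * gK := by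
  have := RingQuot.mkAlgHom_rel k (Rel.KKh (k := k) (n := n) (q := q))
  rw [map_mul, map_mul] at this; exact this

lemma rel_E : gE ^ n ^ 2 = 0 := by
  have := RingQuot.mkAlgHom_rel k (Rel.Enil (k := k) (n := n) (q := q))
  rw [map_pow, map_zero] at this; exact this

lemma rel_F : gF ^ n ^ 2 = 0 := by
  have := RingQuot.mkAlgHom_rel k (Rel.Fnil (k := k) (n := n) (q := q))
  rw [map_pow, map_zero] at this; exact this

lemma Hyp.q_ne (H : Hyp n q) : q ≠ 0 := H.hq.ne_zero (by have := H.hn; positivity)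

lemma Hyp.K_inv (H : Hyp n q) : gK ^ (n - 1) * gK = 1 := by
  rw [← pow_succ, Nat.sub_add_cancel H.hn, rel_K]

lemma Kh_pow : gH ^ (n ^ 2) = 1 := by
  rw [pow_two, pow_mul, rel_Kh, ← pow_mul, ← pow_mul, show (n - 1) * (2 * n) = n * ((n - 1) * 2) by ring,
    pow_mul, rel_K, one_pow]

lemma Hyp.Kh_inv (H : Hyp n q) : gH ^ (n ^ 2 - 1) * gH = 1 := by
  rw [← pow_succ, Nat.sub_add_cancel (by have := H.hn; exact Nat.pos_of_ne_zero (by positivity)), Kh_pow]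

lemma rel_KE (H : Hyp n q) : gK * gE = q ^ n • (gE * gK) := by
  have := RingQuot.mkAlgHom_rel k (Rel.KE (k := k) (n := n) (q := q))
  rw [map_mul, map_mul, map_pow, map_smul] at this
  have h2 := congrArg (· * gK) this
  simp only [mul_assoc] at h2
  erw [H.K_inv] at h2
  rw [mul_one, smul_mul_assoc] at h2
  exact h2

lemma rel_KF (H : Hyp n q) : gK * gF = (q ^ n)⁻¹ • (gF * gK) := by
  have := RingQuot.mkAlgHom_rel k (Rel.KF (k := k) (n := n) (q := q))
  rw [map_mul, map_mul, map_pow, map_smul] at this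
  have h2 := congrArg (· * gK) this
  simp only [mul_assoc] at h2
  erw [H.K_inv] at h2
  rw [mul_one, smul_mul_assoc] at h2
  exact h2

lemma rel_HE (H : Hyp n q) : gH * gE = (q ^ n * (q ^ 2)⁻¹) • (gE * gH) := by
  have := RingQuot.mkAlgHom_rel k (Rel.KhE (k := k) (n := n) (q := q))
  rw [map_mul, map_mul, map_pow, map_smul] at this
  have h2 := congrArg (· * gH) this
  simp only [mul_assoc] at h2
  erw [H.Kh_inv] at h2
  rw [mul_one, smul_mul_assoc] at h2
  exact h2

lemma rel_HF (H : Hyp n q) : gH * gF = ((q ^ n)⁻¹ * q ^ 2) • (gF * gH) := by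
  have := RingQuot.mkAlgHom_rel k (Rel.KhF (k := k) (n := n) (q := q))
  rw [map_mul, map_mul, map_pow, map_smul] at this
  have h2 := congrArg (· * gH) this
  simp only [mul_assoc] at h2
  erw [H.Kh_inv] at h2
  rw [mul_one, smul_mul_assoc] at h2
  exact h2

lemma rel_EF : gF * gE = q⁻¹ • (gE * gF) + (1 - L) := by
  have := RingQuot.mkAlgHom_rel k (Rel.EF (k := k) (n := n) (q := q))
  rw [map_sub, map_sub, map_smul, map_mul, map_mul, map_mul, map_one, map_pow] at this
  exact sub_eq_iff_eq_add'.1 this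

/-- generic: pushing powers through q-commutation -/
lemma qcomm_pow {A : Type} [Ring A] [Algebra k A] {x y : A} {c : k} (h : x * y = c • (y * x)) (s : ℕ) :
    x ^ s * y = c ^ s • (y * x ^ s) := by
  induction s with
  | zero => simp
  | succ s ih =>
    rw [pow_succ, mul_assoc, h, mul_smul_comm, ← mul_assoc, ih, smul_mul_assoc, smul_smul, mul_assoc,
      ← pow_succ']

lemma qcomm_mul {A : Type} [Ring A] [Algebra k A] {x x' y : A} {c c' : k} (h : x * y = c • (y * x))
    (h' : x' * y = c' • (y * x')) :
    (x * x') * y = (c * c') • (y * (x * x')) := by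
  rw [mul_assoc, h', mul_smul_comm, ← mul_assoc, h, smul_mul_assoc, smul_smul, mul_assoc, mul_comm c]

lemma Hyp.qn (H : Hyp n q) : (q ^ n) ^ n = 1 := by
  rw [← pow_mul, ← pow_two, H.hq.pow_eq_one]

lemma Hyp.qn_inv (H : Hyp n q) : (q ^ n) ^ (n - 1) * q ^ n = 1 := by
  rw [← pow_succ, Nat.sub_add_cancel H.hn, H.qn]

lemma Hyp.half (H : Hyp n q) : ∃ m, 0 < m ∧ n = 4 * m ∧ n / 2 = 2 * m ∧ n ^ 2 = 16 * m ^ 2 ∧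
    n ^ 2 / 2 = 8 * m ^ 2 := by
  obtain ⟨m, rfl⟩ := H.h4
  refine ⟨m, by have := H.hn; omega, rfl, by omega, by ring, ?_⟩
  have : (4 * m) ^ 2 = 16 * m ^ 2 := by ring
  omega

lemma Hyp.neg_one (H : Hyp n q) : q ^ (n ^ 2 / 2) = -1 := by
  obtain ⟨m, hm, h1, h2, h3, h4⟩ := H.half
  have h : (q ^ (n ^ 2 / 2)) ^ 2 = 1 := by
    rw [← pow_mul, h4, ← H.hq.pow_eq_one, h3]; congr 1; ring
  rcases (by simpa using h : q ^ (n ^ 2 / 2) = 1 ∨ q ^ (n ^ 2 / 2) = -1) with h | h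
  · exfalso
    have := (H.hq.pow_eq_one_iff_dvd _).1 h
    have h5 : 0 < m ^ 2 := by positivity
    have := Nat.le_of_dvd (by omega) this
    omega
  · exact h

lemma rel_LE (H : Hyp n q) : L * gE = (q⁻¹ ^ 2) • (gE * L) := by
  have h := qcomm_mul (qcomm_pow (rel_KE H) (n - 1)) (rel_HE H)
  have : (q ^ n) ^ (n - 1) * (q ^ n * (q ^ 2)⁻¹) = q⁻¹ ^ 2 := by
    rw [← mul_assoc, H.qn_inv, one_mul, inv_pow]
  rw [this] at h
  exact h

lemma rel_LF (H : Hyp n q) : L * gF = (q ^ 2) • (gF * L) := by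
  have h := qcomm_mul (qcomm_pow (rel_KF H) (n - 1)) (rel_HF H)
  have : (q ^ n)⁻¹ ^ (n - 1) * ((q ^ n)⁻¹ * q ^ 2) = q ^ 2 := by
    rw [← mul_assoc, inv_pow, ← mul_inv, H.qn_inv]; simp
  rw [this] at h
  exact h

lemma rel_TE (H : Hyp n q) : T * gE = (-1 : k) • (gE * T) := by
  have h := qcomm_mul (rel_KE H) (qcomm_pow (rel_HE H) (n / 2))
  have : q ^ n * (q ^ n * (q ^ 2)⁻¹) ^ (n / 2) = -1 := by
    obtain ⟨m, hm, h1, h2, h3, h4⟩ := H.half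
    have hq := H.q_ne
    rw [← H.neg_one, h4, h2, h1]
    rw [mul_pow, inv_pow, ← pow_mul, ← pow_mul]
    field_simp
    ring
  rw [this] at h
  exact h

lemma rel_TF (H : Hyp n q) : T * gF = (-1 : k) • (gF * T) := by
  have h := qcomm_mul (rel_KF H) (qcomm_pow (rel_HF H) (n / 2))
  have : (q ^ n)⁻¹ * ((q ^ n)⁻¹ * q ^ 2) ^ (n / 2) = -1 := by
    have := H.neg_one
    obtain ⟨m, hm, h1, h2, h3, h4⟩ := H.half
    have hq := H.q_ne
    have h5 : (q ^ (8 * m ^ 2))⁻¹ = -1 := by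
      rw [← h4, this]; norm_num
    rw [← h5, h2, h1]
    rw [mul_pow, inv_pow, ← pow_mul, ← pow_mul]
    field_simp
    ring
  rw [this] at h
  exact h

lemma commKH : Commute gK gH := rel_comm

lemma L_eq : L = gK ^ (n - 1) * gH := rfl
lemma T_eq : T = gK * gH ^ (n / 2) := rfl

lemma L_pow (s : ℕ) : L ^ s = gK ^ ((n - 1) * s) * gH ^ s := by
  rw [L_eq, (commKH.pow_left _).mul_pow, ← pow_mul]

lemma commLT : Commute L T := by
  rw [L_eq, T_eq]
  exact Commute.mul_left (Commute.mul_right ((Commute.refl _).pow_left _) (commKH.pow_pow _ _))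
    (Commute.mul_right commKH.symm ((Commute.refl _).pow_right _))

lemma K_pow_mod {a b : ℕ} (h : a % n = b % n) : gK ^ a = gK ^ b := by
  rw [← Nat.div_add_mod a n, ← Nat.div_add_mod b n, pow_add, pow_add, pow_mul, pow_mul, rel_K, h]
  simp

lemma T_sq (H : Hyp n q) : T ^ 2 = 1 := by
  obtain ⟨m, hm, h1, h2, h3, h4⟩ := H.half
  rw [T_eq, (commKH.pow_right _).mul_pow, ← pow_mul, show n / 2 * 2 = n by omega, rel_Kh, ← pow_mul,
    ← pow_add]
  calc _ = gK ^ (n * 2) := by congr 1; have := H.hn; omega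
    _ = 1 := by rw [pow_mul, rel_K, one_pow]

lemma L_ord (H : Hyp n q) : L ^ (n ^ 2 / 2) = 1 := by
  obtain ⟨m, hm, h1, h2, h3, h4⟩ := H.half
  have : n ^ 2 / 2 = n * (2 * m) := by rw [h4, h1]; ring
  rw [L_pow]
  nth_rw 2 [this]
  rw [pow_mul gH, rel_Kh, ← pow_mul, ← pow_mul, ← pow_add, this,
    show (n - 1) * (n * (2 * m)) + (n - 1) * (2 * (2 * m)) = n * ((n - 1) * (2 * m) + (n - 1)) by
      rw [h1]; ring, pow_mul, rel_K, one_pow]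

/-- exponent with `K = T L^(kx n)`. -/
def kx (n : ℕ) : ℕ := 4 * (n / 4) ^ 2 - 2 * (n / 4)

lemma K_TL (H : Hyp n q) : gK = T * L ^ (kx n) := by
  obtain ⟨m, hm, h1, h2, h3, h4⟩ := H.half
  have hx : kx n + 2 * m = 4 * m ^ 2 := by
    have : n / 4 = m := by omega
    rw [kx, this]
    have : 2 * m ≤ 4 * m ^ 2 := by nlinarith
    omega
  have hH : gH ^ (n / 2) * gH ^ (kx n) = gK ^ ((n - 1) * (2 * m)) := by
    rw [← pow_add, h2, add_comm, hx, show 4 * m ^ 2 = n * m by rw [h1]; ring, pow_mul, rel_Kh,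
      ← pow_mul, ← pow_mul]
  rw [L_pow, T_eq, mul_assoc, (commKH.symm.pow_pow _ _).left_comm, hH, ← pow_add, ← pow_succ',
    ← mul_add, hx]
  rw [show (n - 1) * (4 * m ^ 2) + 1 = n * ((n - 1) * m) + 1 by rw [h1]; ring, pow_succ, pow_mul,
    rel_K, one_pow, one_mul]

lemma Kh_KL (H : Hyp n q) : gH = gK * L := by
  rw [L_eq, ← mul_assoc, ← pow_succ', Nat.sub_add_cancel H.hn, rel_K, one_mul]

end QFL


namespace QFL

set_option linter.unusedSectionVars false
set_option linter.unusedVariables false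
set_option autoImplicit false

variable {k : Type} [Field k] {n : ℕ} {q : k}

local notation "gK" => K k n q
local notation "gH" => Kh k n q
local notation "gE" => E k n q
local notation "gF" => F k n q
local notation "L" => gL k n q
local notation "T" => gT k n q

variable {V : Type} [AddCommGroup V] [Module k V] [Module (U k n q) V] [IsScalarTower k (U k n q) V]

/-- weight vectors -/
structure Wt (n : ℕ) (q : k) {V : Type} [AddCommGroup V] [Module k V] [Module (U k n q) V]
    (lam tau : k) (v : V) : Prop where
  hL : gL k n q • v = lam • v
  hT : gT k n q • v = tau • v

lemma Wt.zero (lam tau : k) : Wt n q lam tau (0 : V) := ⟨by simp, by simp⟩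

lemma Wt.add {lam tau : k} {v w : V} (h : Wt n q lam tau v) (h' : Wt n q lam tau w) :
    Wt n q lam tau (v + w) :=
  ⟨by rw [smul_add, smul_add, h.hL, h'.hL], by rw [smul_add, smul_add, h.hT, h'.hT]⟩

lemma Wt.smul {lam tau : k} {v : V} (h : Wt n q lam tau v) (c : k) :
    Wt n q lam tau (c • v) :=
  ⟨by rw [smul_comm, h.hL, smul_comm], by rw [smul_comm, h.hT, smul_comm]⟩

lemma Wt.sum {ι : Type} {lam tau : k} {v : ι → V} (s : Finset ι) (h : ∀ i ∈ s, Wt n q lam tau (v i)) :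
    Wt n q lam tau (∑ i ∈ s, v i) := by
  classical
  induction s using Finset.induction_on with
  | empty => simpa using Wt.zero lam tau
  | insert a s ha ih =>
    rw [Finset.sum_insert ha]
    exact (h a (by simp)).add (ih fun i hi => h i (by simp [hi]))

lemma smul_pow_eigen {x : U k n q} {c : k} {v : V} (h : x • v = c • v) (s : ℕ) :
    x ^ s • v = c ^ s • v := by
  induction s with
  | zero => simp
  | succ s ih => rw [pow_succ, mul_smul, h, smul_comm, ih, smul_smul, pow_succ']

lemma Wt.K (H : Hyp n q) {lam tau : k} {v : V} (h : Wt n q lam tau v) :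
    gK • v = (tau * lam ^ kx n) • v := by
  nth_rw 1 [K_TL H]
  rw [mul_smul, smul_pow_eigen h.hL, smul_comm, h.hT, smul_smul, mul_comm]

lemma Wt.H (H : Hyp n q) {lam tau : k} {v : V} (h : Wt n q lam tau v) :
    gH • v = (tau * lam ^ kx n * lam) • v := by
  nth_rw 1 [Kh_KL H]
  rw [mul_smul, h.hL, smul_comm, h.K H, smul_smul, mul_comm]

lemma qact {x y : U k n q} {c : k} (h : x * y = c • (y * x)) {d : k} {v : V} (hv : x • v = d • v) :
    x • y • v = (c * d) • y • v := by
  rw [← mul_smul, h, smul_assoc, mul_smul, hv, smul_comm y d v, smul_smul]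

lemma Wt.E (H : Hyp n q) {lam tau : k} {v : V} (h : Wt n q lam tau v) :
    Wt n q (q⁻¹ ^ 2 * lam) (-1 * tau) (gE • v) :=
  ⟨qact (rel_LE H) h.hL, qact (rel_TE H) h.hT⟩

lemma Wt.F (H : Hyp n q) {lam tau : k} {v : V} (h : Wt n q lam tau v) :
    Wt n q (q ^ 2 * lam) (-1 * tau) (gF • v) :=
  ⟨qact (rel_LF H) h.hL, qact (rel_TF H) h.hT⟩

lemma Wt.congr {lam tau lam' tau' : k} {v : V} (h : Wt n q lam tau v) (h1 : lam = lam')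
    (h2 : tau = tau') : Wt n q lam' tau' v := by rwa [← h1, ← h2]

lemma Wt.Epow (H : Hyp n q) {lam tau : k} {v : V} (h : Wt n q lam tau v) (s : ℕ) :
    Wt n q (q⁻¹ ^ (2 * s) * lam) ((-1) ^ s * tau) (gE ^ s • v) := by
  induction s with
  | zero => simpa using h
  | succ s ih =>
    rw [pow_succ' gE, mul_smul]
    exact (ih.E H).congr (by ring) (by ring)

lemma Wt.Fpow (H : Hyp n q) {lam tau : k} {v : V} (h : Wt n q lam tau v) (s : ℕ) :
    Wt n q (q ^ (2 * s) * lam) ((-1) ^ s * tau) (gF ^ s • v) := by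
  induction s with
  | zero => simpa using h
  | succ s ih =>
    rw [pow_succ' gF, mul_smul]
    exact (ih.F H).congr (by ring) (by ring)

/-- the structure scalar -/
def sc (q : k) (s : ℕ) (lam : k) : k := (q ^ (s + 1) - 1) / (q - 1) * q⁻¹ ^ s * (1 - q⁻¹ ^ s * lam)

lemma Hyp.q_ne_one (H : Hyp n q) : q - 1 ≠ 0 := by
  obtain ⟨m, hm, h1, h2, h3, h4⟩ := H.half
  intro h
  have h5 : 0 < m ^ 2 := by positivity
  have := (H.hq.pow_eq_one_iff_dvd 1).1 (by rw [pow_one]; exact sub_eq_zero.1 h)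
  have := Nat.le_of_dvd (by omega) this
  omega

lemma sc_succ (H : Hyp n q) (s : ℕ) (lam : k) :
    sc q (s + 1) lam = q⁻¹ * sc q s lam + (1 - q⁻¹ ^ (2 * (s + 1)) * lam) := by
  have h0 := H.q_ne
  have h1 := H.q_ne_one
  unfold sc
  simp only [inv_pow]
  field_simp
  ring

lemma sc_zero (H : Hyp n q) (lam : k) : sc q 0 lam = 1 - lam := by
  have h1 := H.q_ne_one
  simp [sc, h1]

lemma sc_ne_zero (H : Hyp n q) {s : ℕ} {lam : k} (h1 : s + 1 < n ^ 2) (h2 : q ^ s ≠ lam) :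
    sc q s lam ≠ 0 := by
  have h0 := H.q_ne
  refine mul_ne_zero (mul_ne_zero (div_ne_zero ?_ H.q_ne_one) (pow_ne_zero _ (inv_ne_zero h0))) ?_
  · intro h
    have := Nat.le_of_dvd (by omega) ((H.hq.pow_eq_one_iff_dvd _).1 (sub_eq_zero.1 h))
    omega
  · intro h
    apply h2
    rw [inv_pow, sub_eq_zero] at h
    field_simp at h
    exact h

lemma sc_eq_zero (H : Hyp n q) {s : ℕ} {lam : k} (h2 : q ^ s = lam) : sc q s lam = 0 := by
  have h0 := H.q_ne
  rw [sc, ← h2, ← mul_pow, inv_mul_cancel₀ h0]; simp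

lemma sc_last (H : Hyp n q) {s : ℕ} {lam : k} (h2 : s + 1 = n ^ 2) : sc q s lam = 0 := by
  rw [sc, h2, H.hq.pow_eq_one]; simp

lemma FE_act {lam tau : k} {v : V} (h : Wt n q lam tau v) :
    gF • gE • v = q⁻¹ • gE • gF • v + (1 - lam) • v := by
  rw [← mul_smul, rel_EF, add_smul, smul_assoc, mul_smul, sub_smul, one_smul, h.hL, sub_smul, one_smul]

lemma FE_pow (H : Hyp n q) {lam tau : k} {v : V} (h : Wt n q lam tau v) (s : ℕ) :
    gF • gE ^ (s + 1) • v = q⁻¹ ^ (s + 1) • gE ^ (s + 1) • gF • v + sc q s lam • gE ^ s • v := by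
  induction s with
  | zero => simpa [sc_zero H] using FE_act h
  | succ s ih =>
    rw [pow_succ', mul_smul, FE_act (h.Epow H (s + 1)), ih, smul_add, smul_comm gE, smul_comm gE (sc q s lam),
      ← mul_smul gE, ← mul_smul gE, ← pow_succ', ← pow_succ', smul_add, smul_smul q⁻¹, smul_smul q⁻¹,
      add_assoc, ← add_smul, ← pow_succ', sc_succ H s]

lemma FE_low (H : Hyp n q) {lam tau : k} {v : V} (h : Wt n q lam tau v) (hF : gF • v = 0) (s : ℕ) :
    gF • gE ^ (s + 1) • v = sc q s lam • gE ^ s • v := by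
  rw [FE_pow H h, hF]; simp

lemma FpowEpow (H : Hyp n q) {lam tau : k} {v : V} (h : Wt n q lam tau v) (hF : gF • v = 0) (s : ℕ) :
    gF ^ s • gE ^ s • v = (∏ t ∈ Finset.range s, sc q t lam) • v := by
  induction s with
  | zero => simp
  | succ s ih =>
    rw [pow_succ gF, mul_smul, FE_low H h hF, smul_comm, ih, smul_smul, Finset.prod_range_succ, mul_comm]

lemma FpowEpow_zero (H : Hyp n q) {lam tau : k} {v : V} (h : Wt n q lam tau v) (hF : gF • v = 0)
    (s r : ℕ) : gF ^ (s + (r + 1)) • gE ^ s • v = 0 := by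
  rw [add_comm, pow_add, mul_smul, FpowEpow H h hF, smul_comm, pow_succ, mul_smul, hF]; simp

open Polynomial

/-- polynomial in `E` -/
def pE (n : ℕ) (q : k) (f : k[X]) : U k n q := aeval (E k n q) f

lemma pE_monomial (s : ℕ) (c : k) : pE n q (monomial s c) = c • gE ^ s := by
  rw [pE, aeval_monomial, Algebra.smul_def]

lemma pE_add (f g : k[X]) : pE n q (f + g) = pE n q f + pE n q g := map_add _ _ _
lemma pE_mul (f g : k[X]) : pE n q (f * g) = pE n q f * pE n q g := map_mul _ _ _

lemma pE_unit (H : Hyp n q) (N : Submodule (U k n q) V) (f : k[X]) (w : V) (b : ℕ)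
    (h1 : ∀ c < b, f.coeff c = 0) (h2 : f.coeff b ≠ 0) (h3 : pE n q f • w ∈ N) : gE ^ b • w ∈ N := by
  obtain ⟨g, rfl⟩ := Polynomial.X_pow_dvd_iff.2 h1
  have h4 : g.coeff 0 ≠ 0 := by
    have := Polynomial.coeff_X_pow_mul g b 0
    rw [zero_add] at this
    rwa [this] at h2
  have h5 : IsCoprime X g := by
    rw [Polynomial.irreducible_X.coprime_iff_not_dvd, Polynomial.X_dvd_iff]
    exact h4
  obtain ⟨x, y, hxy⟩ := h5.pow_left (m := n ^ 2)
  have h6 : pE n q (x * X ^ n ^ 2) = 0 := by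
    rw [pE, map_mul, map_pow, aeval_X, rel_E, mul_zero]
  have h7 : gE ^ b • w = pE n q y • pE n q (X ^ b * g) • w := by
    have : gE ^ b = pE n q (X ^ b * (x * X ^ n ^ 2 + y * g)) := by
      rw [hxy, mul_one]; simp [pE]
    rw [this, ← mul_smul, ← pE_mul, mul_add, pE_add, pE_mul _ (x * _), h6, mul_zero, zero_add]
    congr 2; ring
  rw [h7]
  exact N.smul_mem _ h3

lemma pE_unit_zero (H : Hyp n q) (f : k[X]) (w : V) (b : ℕ)
    (h1 : ∀ c < b, f.coeff c = 0) (h2 : f.coeff b ≠ 0) (h3 : pE n q f • w = 0) : gE ^ b • w = 0 :=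
  pE_unit H (⊥ : Submodule (U k n q) V) f w b h1 h2 h3

lemma pE_F (H : Hyp n q) {lam tau : k} {v : V} (h : Wt n q lam tau v) (f : k[X]) :
    ∃ g g' : k[X], gF • pE n q f • v = pE n q g' • gF • v + pE n q g • v ∧
      ∀ s, g.coeff s = sc q s lam * f.coeff (s + 1) := by
  induction f using Polynomial.induction_on' with
  | add f1 f2 ih1 ih2 =>
    obtain ⟨g1, g1', h1, h1'⟩ := ih1
    obtain ⟨g2, g2', h2, h2'⟩ := ih2
    refine ⟨g1 + g2, g1' + g2', ?_, ?_⟩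
    · simp only [pE_add, add_smul, smul_add, h1, h2]; abel
    · intro s; simp [h1', h2']; ring
  | monomial s c =>
    cases s with
    | zero =>
      refine ⟨0, monomial 0 c, ?_, ?_⟩
      · rw [pE_monomial]; simp [pE, smul_comm gF]
      · intro s; rw [coeff_monomial]; simp
    | succ s =>
      refine ⟨monomial s (c * sc q s lam), monomial (s + 1) (c * q⁻¹ ^ (s + 1)), ?_, ?_⟩
      · rw [pE_monomial, pE_monomial, pE_monomial, smul_assoc, smul_comm gF, FE_pow H h, smul_add,
          smul_smul c, smul_smul c, smul_assoc, smul_assoc]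
      · intro t; simp only [coeff_monomial, add_left_inj]; split_ifs with hh
        · rw [hh, mul_comm]
        · simp

lemma pE_L (H : Hyp n q) {lam tau : k} {v : V} (h : Wt n q lam tau v) (f : k[X]) :
    ∃ g : k[X], L • pE n q f • v = pE n q g • v ∧
      ∀ s, g.coeff s = (q⁻¹ ^ (2 * s) * lam) * f.coeff s := by
  induction f using Polynomial.induction_on' with
  | add f1 f2 ih1 ih2 =>
    obtain ⟨g1, h1, h1'⟩ := ih1
    obtain ⟨g2, h2, h2'⟩ := ih2
    refine ⟨g1 + g2, ?_, ?_⟩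
    · simp only [pE_add, add_smul, smul_add, h1, h2]
    · intro s; rw [coeff_add, coeff_add, h1', h2']; ring
  | monomial s c =>
      refine ⟨monomial s (c * (q⁻¹ ^ (2 * s) * lam)), ?_, ?_⟩
      · rw [pE_monomial, pE_monomial, smul_assoc, smul_assoc, smul_comm L, (h.Epow H s).hL, smul_smul]
      · intro t; rw [coeff_monomial, coeff_monomial]; split_ifs with hh
        · rw [hh, mul_comm]
        · simp

lemma pE_T (H : Hyp n q) {lam tau : k} {v : V} (h : Wt n q lam tau v) (f : k[X]) :
    ∃ g : k[X], T • pE n q f • v = pE n q g • v ∧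
      ∀ s, g.coeff s = ((-1) ^ s * tau) * f.coeff s := by
  induction f using Polynomial.induction_on' with
  | add f1 f2 ih1 ih2 =>
    obtain ⟨g1, h1, h1'⟩ := ih1
    obtain ⟨g2, h2, h2'⟩ := ih2
    refine ⟨g1 + g2, ?_, ?_⟩
    · simp only [pE_add, add_smul, smul_add, h1, h2]
    · intro s; rw [coeff_add, coeff_add, h1', h2']; ring
  | monomial s c =>
      refine ⟨monomial s (c * ((-1) ^ s * tau)), ?_, ?_⟩
      · rw [pE_monomial, pE_monomial, smul_assoc, smul_assoc, smul_comm T, (h.Epow H s).hT, smul_smul]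
      · intro t; rw [coeff_monomial, coeff_monomial]; split_ifs with hh
        · rw [hh, mul_comm]
        · simp

lemma stable_smul (H : Hyp n q) (W : Submodule k V) (hL : ∀ w ∈ W, L • w ∈ W) (hT : ∀ w ∈ W, T • w ∈ W)
    (hE : ∀ w ∈ W, gE • w ∈ W) (hF : ∀ w ∈ W, gF • w ∈ W) (x : U k n q) : ∀ w ∈ W, x • w ∈ W := by
  obtain ⟨y, rfl⟩ := RingQuot.mkAlgHom_surjective k (Rel k n q) x
  have hLp : ∀ s : ℕ, ∀ w ∈ W, L ^ s • w ∈ W := by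
    intro s
    induction s with
    | zero => intro w hw; simpa using hw
    | succ s ih => intro w hw; rw [pow_succ, mul_smul]; exact ih _ (hL _ hw)
  have hK : ∀ w ∈ W, gK • w ∈ W := by
    intro w hw
    rw [K_TL H, mul_smul]
    exact hT _ (hLp _ _ hw)
  have hH : ∀ w ∈ W, gH • w ∈ W := by
    intro w hw
    rw [Kh_KL H, mul_smul]
    exact hK _ (hL _ hw)
  induction y using FreeAlgebra.induction with
  | grade0 r => intro w hw; rw [AlgHom.commutes, algebraMap_smul]; exact W.smul_mem _ hw
  | grade1 i =>
    fin_cases i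
    · exact hK
    · exact hH
    · exact hE
    · exact hF
  | mul a b ha hb => intro w hw; rw [map_mul, mul_smul]; exact ha _ (hb _ hw)
  | add a b ha hb => intro w hw; rw [map_add, add_smul]; exact W.add_mem (ha _ hw) (hb _ hw)

/-- `k[E]v + k[E]w` -/
def polySpan (n : ℕ) (q : k) {V : Type} [AddCommGroup V] [Module k V] [Module (U k n q) V]
    [IsScalarTower k (U k n q) V] (v w : V) : Submodule k V where
  carrier := {x | ∃ f g : k[X], x = pE n q f • v + pE n q g • w}
  add_mem' := by
    rintro _ _ ⟨f, g, rfl⟩ ⟨f', g', rfl⟩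
    exact ⟨f + f', g + g', by simp only [pE_add, add_smul]; abel⟩
  zero_mem' := ⟨0, 0, by simp [pE]⟩
  smul_mem' := by
    rintro c _ ⟨f, g, rfl⟩
    exact ⟨c • f, c • g, by simp only [pE, map_smul, smul_add, smul_assoc]⟩

lemma polySpan_stable (H : Hyp n q) {l1 t1 l2 t2 : k} {v w : V} (hv : Wt n q l1 t1 v)
    (hw : Wt n q l2 t2 w) (hF : gF • v = 0) (hF' : ∃ f, gF • w = pE n q f • v) (x : U k n q) :
    ∀ z ∈ polySpan n q v w, x • z ∈ polySpan n q v w := by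
  apply stable_smul H
  · rintro _ ⟨f, g, rfl⟩
    obtain ⟨f', h, -⟩ := pE_L H hv f
    obtain ⟨g', h', -⟩ := pE_L H hw g
    exact ⟨f', g', by rw [smul_add, h, h']⟩
  · rintro _ ⟨f, g, rfl⟩
    obtain ⟨f', h, -⟩ := pE_T H hv f
    obtain ⟨g', h', -⟩ := pE_T H hw g
    exact ⟨f', g', by rw [smul_add, h, h']⟩
  · rintro _ ⟨f, g, rfl⟩
    have : gE = pE n q X := by simp [pE]
    exact ⟨X * f, X * g, by rw [pE_mul, pE_mul, smul_add, ← this, mul_smul, mul_smul]⟩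
  · rintro _ ⟨f, g, rfl⟩
    obtain ⟨f0, h0⟩ := hF'
    obtain ⟨f1, f2, h, -⟩ := pE_F H hv f
    obtain ⟨g1, g2, h', -⟩ := pE_F H hw g
    refine ⟨f1 + g2 * f0, g1, ?_⟩
    rw [smul_add, h, h', hF, h0, pE_add, add_smul, pE_mul, mul_smul, smul_zero, zero_add, add_assoc]

lemma low_span (H : Hyp n q) {l1 t1 : k} {v : V} (hv : Wt n q l1 t1 v) (hF : gF • v = 0) (x : U k n q) :
    ∃ f, x • v = pE n q f • v := by
  obtain ⟨f, g, h⟩ := polySpan_stable H hv (Wt.zero 0 0) hF ⟨0, by simp [pE]⟩ x v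
    ⟨1, 0, by simp [pE]⟩
  exact ⟨f, by simpa using h⟩

end QFL


namespace QFL

set_option linter.unusedSectionVars false
set_option linter.unusedVariables false
set_option autoImplicit false

variable {k : Type} [Field k] {n : ℕ} {q : k}

local notation "gK" => K k n q
local notation "gH" => Kh k n q
local notation "gE" => E k n q
local notation "gF" => F k n q
local notation "L" => gL k n q
local notation "T" => gT k n q

variable {V : Type} [AddCommGroup V] [Module k V] [Module (U k n q) V] [IsScalarTower k (U k n q) V]

lemma phi_eq (i : ℕ) : phi k n q i = ((n ^ 2 : k)⁻¹ * 2) • ∑ t ∈ Finset.range (n ^ 2 / 2),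
    (q⁻¹ ^ (2 * i * t)) • L ^ t := rfl

lemma Hyp.cR [CharZero k] (H : Hyp n q) : ((n ^ 2 : k)⁻¹ * 2) * ((n ^ 2 / 2 : ℕ) : k) = 1 := by
  obtain ⟨m, hm, h1, h2, h3, h4⟩ := H.half
  have : ((m : k)) ≠ 0 := by exact_mod_cast hm.ne'
  rw [h4, h1]; push_cast; field_simp; norm_num

lemma phi_act [CharZero k] (H : Hyp n q) {i : ℕ} {w : V} (h : L • w = q ^ (2 * i) • w) :
    phi k n q i • w = w := by
  have h0 := H.q_ne
  have : ∀ t ∈ Finset.range (n ^ 2 / 2), ((q⁻¹ ^ (2 * i * t)) • L ^ t) • w = w := by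
    intro t _
    rw [smul_assoc, smul_pow_eigen h, smul_smul, ← pow_mul, ← mul_pow, inv_mul_cancel₀ h0, one_pow,
      one_smul]
  rw [phi_eq, smul_assoc, Finset.sum_smul, Finset.sum_congr rfl this, Finset.sum_const,
    Finset.card_range, ← Nat.cast_smul_eq_nsmul k, smul_smul, H.cR, one_smul]

lemma Hyp.qR (H : Hyp n q) : q ^ (2 * (n ^ 2 / 2)) = 1 := by
  rw [pow_mul', H.neg_one]; norm_num

lemma L_phi (H : Hyp n q) (i : ℕ) : L * phi k n q i = q ^ (2 * i) • phi k n q i := by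
  have h0 := H.q_ne
  rw [phi_eq, mul_smul_comm, smul_comm (q ^ (2 * i))]
  congr 1
  have h1 : L * ∑ t ∈ Finset.range (n ^ 2 / 2), (q⁻¹ ^ (2 * i * t)) • L ^ t
      = q ^ (2 * i) • ∑ t ∈ Finset.range (n ^ 2 / 2), (q⁻¹ ^ (2 * i * (t + 1))) • L ^ (t + 1) := by
    rw [Finset.mul_sum, Finset.smul_sum]
    refine Finset.sum_congr rfl fun t _ => ?_
    rw [mul_smul_comm, ← pow_succ', smul_smul]
    congr 1
    simp only [inv_pow]
    field_simp
    ring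
  rw [h1]
  congr 1
  have h2 := Finset.sum_range_succ (fun t => (q⁻¹ ^ (2 * i * t)) • L ^ t) (n ^ 2 / 2)
  rw [Finset.sum_range_succ'] at h2
  have h3 : (q⁻¹ ^ (2 * i * (n ^ 2 / 2))) • L ^ (n ^ 2 / 2) = (q⁻¹ ^ (2 * i * 0)) • L ^ 0 := by
    rw [L_ord H, show 2 * i * (n ^ 2 / 2) = 2 * (n ^ 2 / 2) * i by ring, inv_pow, pow_mul, H.qR]; simp
  rw [h3] at h2
  exact add_right_cancel h2

lemma oneJ_act [CharZero k] {j : ℕ} (hj : j ≤ 1) {w : V} (h : T • w = ((-1 : k) ^ j) • w) :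
    oneJ k n q j • w = w := by
  have h2 : (2 : k)⁻¹ • (w + w) = w := by
    rw [← two_smul k w, smul_smul, inv_mul_cancel₀ two_ne_zero, one_smul]
  interval_cases j
  · rw [oneJ, if_pos rfl, ← T_eq, smul_assoc, add_smul, one_smul, h]; simpa using h2
  · rw [oneJ, if_neg one_ne_zero, ← T_eq, smul_assoc, sub_smul, one_smul, h]; simpa using h2

lemma T_oneJ (H : Hyp n q) {j : ℕ} (hj : j ≤ 1) : T * oneJ k n q j = ((-1 : k) ^ j) • oneJ k n q j := by
  have h := T_sq H
  rw [pow_two] at h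
  interval_cases j
  · rw [oneJ, if_pos rfl, ← T_eq, mul_smul_comm, mul_add, h, mul_one, add_comm]; simp
  · rw [oneJ, if_neg one_ne_zero, ← T_eq, mul_smul_comm, mul_sub, h, mul_one]
    rw [smul_comm]; congr 1; rw [pow_one]
    exact ((neg_smul (1 : k) (1 - T)).trans (by rw [one_smul, neg_sub])).symm

lemma commT_phi (i : ℕ) : Commute T (phi k n q i) := by
  rw [phi_eq]
  refine Commute.smul_right (Commute.sum_right _ _ _ fun t _ => Commute.smul_right ?_ _) _
  exact commLT.symm.pow_right _

lemma e_act [CharZero k] (H : Hyp n q) {i j : ℕ} (hj : j ≤ 1) {w : V}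
    (h : Wt n q (q ^ (2 * i)) ((-1) ^ j) w) : eIdem k n q i j • w = w := by
  rw [eIdem, mul_smul, oneJ_act hj h.hT, phi_act H h.hL]

lemma e_wt (H : Hyp n q) {i j : ℕ} (hj : j ≤ 1) :
    Wt n q (q ^ (2 * i)) ((-1) ^ j) (eIdem k n q i j) := by
  constructor
  · rw [eIdem, smul_eq_mul, ← mul_assoc, L_phi H, smul_mul_assoc]
  · rw [eIdem, smul_eq_mul, (commT_phi i).left_comm, T_oneJ H hj, mul_smul_comm]

lemma sum_phi [CharZero k] (H : Hyp n q) :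
    ∑ i ∈ Finset.range (n ^ 2 / 2), phi k n q (i + 1) = 1 := by
  have h0 := H.q_ne
  obtain ⟨m, hm, h1, h2, h3, h4⟩ := H.half
  have hm2 : 0 < m ^ 2 := by positivity
  simp only [phi_eq]
  rw [← Finset.smul_sum, Finset.sum_comm]
  have key : ∀ t ∈ Finset.range (n ^ 2 / 2), t ≠ 0 →
      ∑ i ∈ Finset.range (n ^ 2 / 2), (q⁻¹ ^ (2 * (i + 1) * t)) • L ^ t = 0 := by
    intro t ht ht0
    rw [Finset.mem_range] at ht
    rw [← Finset.sum_smul]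
    have hy : (q⁻¹ ^ (2 * t)) ≠ 1 := by
      intro h
      rw [inv_pow, inv_eq_one] at h
      have := Nat.le_of_dvd (by omega) ((H.hq.pow_eq_one_iff_dvd _).1 h)
      omega
    have hs : ∑ i ∈ Finset.range (n ^ 2 / 2), q⁻¹ ^ (2 * (i + 1) * t) =
        (q⁻¹ ^ (2 * t)) * ∑ i ∈ Finset.range (n ^ 2 / 2), (q⁻¹ ^ (2 * t)) ^ i := by
      rw [Finset.mul_sum]
      refine Finset.sum_congr rfl fun i _ => ?_
      rw [← pow_succ', ← pow_mul]; congr 1; ring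
    have hz : ∑ i ∈ Finset.range (n ^ 2 / 2), (q⁻¹ ^ (2 * t)) ^ i = 0 := by
      rw [geom_sum_eq hy, ← pow_mul, show 2 * t * (n ^ 2 / 2) = 2 * (n ^ 2 / 2) * t by ring, inv_pow,
        pow_mul, H.qR]; simp
    rw [hs, hz, mul_zero, zero_smul]
  rw [Finset.sum_eq_single_of_mem 0 (by rw [Finset.mem_range]; omega) key]
  simp only [mul_zero, pow_zero, one_smul]
  rw [Finset.sum_const, Finset.card_range, ← Nat.cast_smul_eq_nsmul k, smul_smul, H.cR, one_smul]

lemma sum_e [CharZero k] (H : Hyp n q) :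
    ∑ i ∈ Finset.range (n ^ 2 / 2), ∑ j ∈ Finset.range 2, eIdem k n q (i + 1) j = 1 := by
  have : ∀ i ∈ Finset.range (n ^ 2 / 2), ∑ j ∈ Finset.range 2, eIdem k n q (i + 1) j = phi k n q (i + 1) := by
    intro i _
    rw [Finset.sum_range_succ, Finset.sum_range_one, eIdem, eIdem, ← mul_add]
    have h2 : oneJ k n q 0 + oneJ k n q 1 = 1 := by
      rw [oneJ, oneJ, if_pos rfl, if_neg one_ne_zero, ← smul_add, add_add_sub_cancel,
        ← two_smul k, smul_smul, inv_mul_cancel₀ two_ne_zero, one_smul]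
    rw [h2, mul_one]
  rw [Finset.sum_congr rfl this, sum_phi H]

/-- span of group elements -/
def HH (k : Type) [Field k] (n : ℕ) (q : k) : Submodule k (U k n q) :=
  Submodule.span k {x | ∃ c d : ℕ, x = K k n q ^ c * Kh k n q ^ d}

lemma HH_mem (c d : ℕ) : gK ^ c * gH ^ d ∈ HH k n q := Submodule.subset_span ⟨c, d, rfl⟩

lemma HH_mul {x y : U k n q} (hx : x ∈ HH k n q) (hy : y ∈ HH k n q) : x * y ∈ HH k n q := by
  induction hx using Submodule.span_induction with
  | mem x hx =>
    obtain ⟨c, d, rfl⟩ := hx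
    induction hy using Submodule.span_induction with
    | mem y hy =>
      obtain ⟨c', d', rfl⟩ := hy
      rw [mul_assoc, (commKH.symm.pow_pow d c').left_comm, ← pow_add, ← mul_assoc, ← pow_add]
      exact HH_mem _ _
    | zero => rw [mul_zero]; exact zero_mem _
    | add x y _ _ h1 h2 => rw [mul_add]; exact add_mem h1 h2
    | smul c x _ h => rw [mul_smul_comm]; exact Submodule.smul_mem _ _ h
  | zero => rw [zero_mul]; exact zero_mem _
  | add x y _ _ h1 h2 => rw [add_mul]; exact add_mem h1 h2
  | smul c x _ h => rw [smul_mul_assoc]; exact Submodule.smul_mem _ _ h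

lemma e_mem_HH (i j : ℕ) : eIdem k n q i j ∈ HH k n q := by
  have h1 : (1 : U k n q) ∈ HH k n q := by simpa using HH_mem (k := k) (n := n) (q := q) 0 0
  have h2 : T ∈ HH k n q := by simpa [T_eq] using HH_mem (k := k) (n := n) (q := q) 1 (n / 2)
  refine HH_mul ?_ ?_
  · rw [phi_eq]
    refine Submodule.smul_mem _ _ (Submodule.sum_mem _ fun t _ => Submodule.smul_mem _ _ ?_)
    rw [L_pow]; exact HH_mem _ _
  · rw [oneJ]
    split_ifs
    · exact Submodule.smul_mem _ _ (add_mem h1 h2)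
    · exact Submodule.smul_mem _ _ (sub_mem h1 h2)

/-- elements of the group algebra act by scalars on weight idempotents -/
lemma HH_e (H : Hyp n q) {h : U k n q} (hh : h ∈ HH k n q) {lam tau : k} {w : V} (hw : Wt n q lam tau w) :
    ∃ c : k, h • w = c • w := by
  induction hh using Submodule.span_induction with
  | mem x hx =>
    obtain ⟨c, d, rfl⟩ := hx
    exact ⟨_, by rw [mul_smul, smul_pow_eigen (hw.H H), smul_comm, smul_pow_eigen (hw.K H), smul_smul]⟩
  | zero => exact ⟨0, by simp⟩
  | add x y _ _ h1 h2 =>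
    obtain ⟨c, h1⟩ := h1
    obtain ⟨d, h2⟩ := h2
    exact ⟨c + d, by rw [add_smul, add_smul, h1, h2]⟩
  | smul c x _ h =>
    obtain ⟨d, h⟩ := h
    exact ⟨c * d, by rw [smul_assoc, h, smul_smul]⟩

/-- group algebra preserves the kernel of `F` -/
lemma HH_F (H : Hyp n q) {h : U k n q} (hh : h ∈ HH k n q) {w : V} (hw : gF • w = 0) :
    gF • h • w = 0 := by
  have h0 := H.q_ne
  induction hh using Submodule.span_induction with
  | mem x hx =>
    obtain ⟨c, d, rfl⟩ := hx
    have := qcomm_mul (qcomm_pow (rel_KF H) c) (qcomm_pow (rel_HF H) d)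
    have h2 : (gK ^ c * gH ^ d) • gF • w = 0 := by rw [hw, smul_zero]
    rw [← mul_smul, this, smul_assoc, mul_smul gF] at h2
    refine (smul_eq_zero.1 h2).resolve_left ?_
    simp [h0]
  | zero => simp
  | add x y _ _ h1 h2 => rw [add_smul, smul_add, h1, h2, add_zero]
  | smul c x _ h => rw [smul_assoc, smul_comm, h, smul_zero]

/-- every nonzero module with nonzero kernel of `F` has a lowest weight vector -/
lemma exists_low [CharZero k] (H : Hyp n q) {w : V} (hw : w ≠ 0) (hF : gF • w = 0) :
    ∃ i j : ℕ, 1 ≤ i ∧ i ≤ n ^ 2 / 2 ∧ j ≤ 1 ∧ ∃ v : V, v ≠ 0 ∧ gF • v = 0 ∧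
      Wt n q (q ^ (2 * i)) ((-1) ^ j) v := by
  by_contra hcon
  push Not at hcon
  have : ∀ i ∈ Finset.range (n ^ 2 / 2), ∀ j ∈ Finset.range 2, eIdem k n q (i + 1) j • w = 0 := by
    intro i hi j hj
    rw [Finset.mem_range] at hi hj
    by_contra hne
    have hwt := e_wt H (i := i + 1) (j := j) (by omega)
    refine hcon (i + 1) j (by omega) (by omega) (by omega) _ hne (HH_F H (e_mem_HH _ _) hF) ⟨?_, ?_⟩
    · rw [← mul_smul, ← smul_eq_mul L, hwt.hL, smul_assoc]
    · rw [← mul_smul, ← smul_eq_mul T, hwt.hT, smul_assoc]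
  apply hw
  rw [← one_smul (U k n q) w, ← sum_e H, Finset.sum_smul]
  refine Finset.sum_eq_zero fun i hi => ?_
  rw [Finset.sum_smul]
  exact Finset.sum_eq_zero fun j hj => this i hi j hj

lemma exists_low' [CharZero k] (H : Hyp n q) [Nontrivial V] :
    ∃ i j : ℕ, 1 ≤ i ∧ i ≤ n ^ 2 / 2 ∧ j ≤ 1 ∧ ∃ v : V, v ≠ 0 ∧ gF • v = 0 ∧
      Wt n q (q ^ (2 * i)) ((-1) ^ j) v := by
  obtain ⟨w, hw⟩ := exists_ne (0 : V)
  have hex : ∃ s, gF ^ s • w = 0 := ⟨n ^ 2, by rw [rel_F, zero_smul]⟩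
  classical
  have h0 : Nat.find hex ≠ 0 := by
    intro h
    have := Nat.find_spec hex
    rw [h, pow_zero, one_smul] at this
    exact hw this
  obtain ⟨s, hs⟩ := Nat.exists_eq_succ_of_ne_zero h0
  refine exists_low H (w := gF ^ s • w) (Nat.find_min hex (by omega)) ?_
  rw [← mul_smul, ← pow_succ', ← Nat.succ_eq_add_one, ← hs]
  exact Nat.find_spec hex

end QFL


namespace QFL

set_option linter.unusedSectionVars false
set_option linter.unusedVariables false
set_option autoImplicit false

variable {k : Type} [Field k] {n : ℕ} {q : k}

local notation "gK" => K k n q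
local notation "gH" => Kh k n q
local notation "gE" => E k n q
local notation "gF" => F k n q
local notation "L" => gL k n q
local notation "T" => gT k n q

variable {V : Type} [AddCommGroup V] [Module k V] [Module (U k n q) V] [IsScalarTower k (U k n q) V]

/-- commutation of powers of `F` past `E` in any algebra -/
lemma FE_alg {A : Type} [Ring A] [Algebra k A] {e f l : A} {q : k} (h0 : q ≠ 0)
    (h1 : f * e = q⁻¹ • (e * f) + (1 - l)) (h2 : l * f = q ^ 2 • (f * l)) (s : ℕ) :
    f ^ (s + 1) * e = q⁻¹ ^ (s + 1) • (e * f ^ (s + 1)) +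
      f ^ s * ((∑ t ∈ Finset.range (s + 1), q⁻¹ ^ t) • (1 : A) -
        (∑ t ∈ Finset.range (s + 1), q ^ t) • l) := by
  induction s with
  | zero => simp [h1]
  | succ s ih =>
    rw [pow_succ f (s + 1), mul_assoc, h1, mul_add, mul_smul_comm, ← mul_assoc, ih, add_mul,
      geom_sum_succ (n := s + 1), geom_sum_succ (n := s + 1)]
    generalize (∑ t ∈ Finset.range (s + 1), q⁻¹ ^ t) = x
    generalize (∑ t ∈ Finset.range (s + 1), q ^ t) = y
    have h3 : (x • (1 : A) - y • l) * f = f * (x • 1 - (q ^ 2 * y) • l) := by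
      rw [sub_mul, mul_sub, smul_mul_assoc, smul_mul_assoc, h2, mul_smul_comm, mul_smul_comm, one_mul,
        mul_one, smul_smul, mul_comm y]
    rw [mul_assoc (f ^ s), h3, ← mul_assoc (f ^ s), ← pow_succ, smul_add, smul_mul_assoc, smul_smul,
      ← pow_succ', mul_assoc e, add_assoc]
    congr 1
    rw [← mul_smul_comm, ← mul_add]
    congr 1
    rw [smul_sub, smul_smul, smul_smul, show q⁻¹ * (q ^ 2 * y) = q * y by field_simp, add_smul, add_smul,
      one_smul, one_smul]
    abel

lemma FE_alg_last {A : Type} [Ring A] [Algebra k A] {e f l : A} {q : k} (h0 : q ≠ 0)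
    (h1 : f * e = q⁻¹ • (e * f) + (1 - l)) (h2 : l * f = q ^ 2 • (f * l)) (s : ℕ)
    (h3 : (∑ t ∈ Finset.range (s + 1), q⁻¹ ^ t) = 0) (h4 : (∑ t ∈ Finset.range (s + 1), q ^ t) = 0) :
    f ^ (s + 1) * e = q⁻¹ ^ (s + 1) • (e * f ^ (s + 1)) := by
  rw [FE_alg h0 h1 h2, h3, h4]; simp

/-- basis vectors -/
def vb (k : Type) [Field k] (N b a : ℕ) : (Fin N × Fin N) →₀ k :=
  if h : b < N ∧ a < N then Finsupp.single (⟨b, h.1⟩, ⟨a, h.2⟩) 1 else 0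

/-- operator with prescribed values -/
def op {N : ℕ} (f : ℕ → ℕ → (Fin N × Fin N) →₀ k) : Module.End k ((Fin N × Fin N) →₀ k) :=
  Finsupp.linearCombination k (fun p : Fin N × Fin N => f p.1 p.2)

lemma vb_out {N b a : ℕ} (h : ¬ (b < N ∧ a < N)) : vb k N b a = 0 := by rw [vb, dif_neg h]

lemma vb_ne {N b a : ℕ} (h : (b < N ∧ a < N)) : vb k N b a ≠ 0 := by
  rw [vb, dif_pos h]; simp

lemma op_vb {N : ℕ} (f : ℕ → ℕ → (Fin N × Fin N) →₀ k)
    (h : ∀ b a, ¬ (b < N ∧ a < N) → f b a = 0) (b a : ℕ) : op f (vb k N b a) = f b a := by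
  by_cases hh : b < N ∧ a < N
  · rw [vb, dif_pos hh, op, Finsupp.linearCombination_single, one_smul]
  · rw [vb_out hh, h b a hh, map_zero]

lemma op_ext {N : ℕ} {f g : Module.End k ((Fin N × Fin N) →₀ k)}
    (h : ∀ b a, b < N → f (vb k N b a) = g (vb k N b a)) : f = g := by
  refine Finsupp.lhom_ext' fun p => LinearMap.ext_ring ?_
  have := h p.1 p.2 p.1.2
  rw [vb, dif_pos ⟨p.1.2, p.2.2⟩] at this
  exact this

/-- diagonal operator -/
def dg {N : ℕ} (c : ℕ → ℕ → k) : Module.End k ((Fin N × Fin N) →₀ k) := op fun b a => c b a • vb k N b a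

lemma dg_vb {N : ℕ} (c : ℕ → ℕ → k) (b a : ℕ) : dg c (vb k N b a) = c b a • vb k N b a :=
  op_vb _ (fun b a h => by rw [vb_out h, smul_zero]) b a

lemma dg_pow_vb {N : ℕ} (c : ℕ → ℕ → k) (s b a : ℕ) :
    (dg c ^ s) (vb k N b a) = c b a ^ s • vb k N b a := by
  induction s with
  | zero => simp
  | succ s ih => rw [pow_succ, Module.End.mul_apply, dg_vb, map_smul, ih, smul_smul, pow_succ']

def oE (k : Type) [Field k] (N : ℕ) : Module.End k ((Fin N × Fin N) →₀ k) := op fun b a => vb k N (b + 1) a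

lemma oE_vb {N : ℕ} (b a : ℕ) : oE k N (vb k N b a) = vb k N (b + 1) a :=
  op_vb _ (fun b a h => vb_out (by omega)) b a

lemma oE_pow {N : ℕ} (s b a : ℕ) : (oE k N ^ s) (vb k N b a) = vb k N (b + s) a := by
  induction s with
  | zero => simp
  | succ s ih => rw [pow_succ', Module.End.mul_apply, ih, oE_vb, add_assoc]

def oF (N : ℕ) (q lam : k) : Module.End k ((Fin N × Fin N) →₀ k) := op fun b a =>
  q⁻¹ ^ b • vb k N b (a + 1) + (if b = 0 then 0 else sc q (b - 1) (q ^ (2 * a) * lam) • vb k N (b - 1) a)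

lemma oF_vb (H : Hyp n q) (lam : k) (b a : ℕ) : oF (n ^ 2) q lam (vb k (n ^ 2) b a) =
    q⁻¹ ^ b • vb k _ b (a + 1) +
    (if b = 0 then 0 else sc q (b - 1) (q ^ (2 * a) * lam) • vb k _ (b - 1) a) := by
  refine op_vb _ (fun b a h => ?_) b a
  rw [vb_out (by omega), smul_zero, zero_add]
  split_ifs with hb
  · rfl
  · by_cases h1 : b - 1 + 1 = n ^ 2
    · rw [sc_last H h1, zero_smul]
    · rw [vb_out (by omega), smul_zero]

lemma oF_vb0 (H : Hyp n q) (lam : k) (a : ℕ) : oF (n ^ 2) q lam (vb k (n ^ 2) 0 a) =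
    vb k _ 0 (a + 1) := by
  rw [oF_vb H]; simp

lemma oF_vbs (H : Hyp n q) (lam : k) (b a : ℕ) : oF (n ^ 2) q lam (vb k (n ^ 2) (b + 1) a) =
    q⁻¹ ^ (b + 1) • vb k _ (b + 1) (a + 1) + sc q b (q ^ (2 * a) * lam) • vb k _ b a := by
  rw [oF_vb H, if_neg (by omega)]; simp

lemma oF_pow0 (H : Hyp n q) (lam : k) (s a : ℕ) : (oF (n ^ 2) q lam ^ s) (vb k (n ^ 2) 0 a) =
    vb k _ 0 (a + s) := by
  induction s with
  | zero => simp
  | succ s ih => rw [pow_succ' (oF (n ^ 2) q lam), Module.End.mul_apply, ih, oF_vb0 H, add_assoc]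

/-- eigenvalue of `L` -/
def mu (q lam : k) (b a : ℕ) : k := q⁻¹ ^ (2 * b) * (q ^ (2 * a) * lam)
/-- eigenvalue of `K` -/
def ka (n : ℕ) (q kap : k) (b a : ℕ) : k := (q ^ n) ^ b * ((q ^ n)⁻¹ ^ a * kap)

lemma o_EF (H : Hyp n q) (lam : k) : oF (n ^ 2) q lam * oE k (n ^ 2) =
    q⁻¹ • (oE k (n ^ 2) * oF (n ^ 2) q lam) + (1 - dg (mu q lam)) := by
  refine op_ext fun b a _ => ?_
  simp only [Module.End.mul_apply, LinearMap.add_apply, LinearMap.smul_apply, LinearMap.sub_apply,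
    Module.End.one_apply, dg_vb, oE_vb, oF_vbs H, mu]
  cases b with
  | zero =>
    rw [oF_vb0 H, oE_vb, sc_zero H]
    simp [sub_smul]
  | succ b =>
    rw [oF_vbs H, map_add, map_smul, map_smul, oE_vb, oE_vb, sc_succ H]
    generalize vb k (n ^ 2) (b + 1) a = Y
    generalize vb k (n ^ 2) (b + 1 + 1) (a + 1) = X
    rw [pow_succ' q⁻¹ (b + 1)]
    module

lemma o_LF (H : Hyp n q) (lam : k) : dg (mu q lam) * oF (n ^ 2) q lam =
    q ^ 2 • (oF (n ^ 2) q lam * dg (mu q lam)) := by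
  have h0 := H.q_ne
  refine op_ext fun b a _ => ?_
  simp only [Module.End.mul_apply, LinearMap.smul_apply, dg_vb, map_smul]
  cases b with
  | zero =>
    rw [oF_vb0 H, dg_vb, smul_smul, mu, mu]; congr 1; ring
  | succ b =>
    rw [oF_vbs H, map_add, map_smul, map_smul, dg_vb, dg_vb]
    simp only [smul_add, smul_smul, mu, inv_pow]
    congr 2 <;> field_simp <;> ring

lemma o_FN (H : Hyp n q) (lam : k) : oF (n ^ 2) q lam ^ (n ^ 2) = 0 := by
  have h0 := H.q_ne
  have hN : n ^ 2 - 1 + 1 = n ^ 2 := Nat.sub_add_cancel (Nat.pos_of_ne_zero (by have := H.hn; positivity))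
  have g1 : (∑ t ∈ Finset.range (n ^ 2), q ^ t) = 0 := by
    rw [geom_sum_eq (sub_ne_zero.1 H.q_ne_one), H.hq.pow_eq_one]; simp
  have g2 : (∑ t ∈ Finset.range (n ^ 2), q⁻¹ ^ t) = 0 := by
    rw [geom_sum_eq (by intro h; exact H.q_ne_one (by rw [inv_eq_one.1 h, sub_self])), inv_pow,
      H.hq.pow_eq_one]; simp
  have h := FE_alg_last (A := Module.End k ((Fin (n ^ 2) × Fin (n ^ 2)) →₀ k)) h0 (o_EF H lam) (o_LF H lam) (n ^ 2 - 1)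
    (by rw [hN, g2]) (by rw [hN, g1])
  rw [hN, inv_pow, H.hq.pow_eq_one, inv_one, one_smul] at h
  have hc : Commute (oF (n ^ 2) q lam ^ (n ^ 2)) (oE k (n ^ 2)) := h
  refine op_ext fun b a _ => ?_
  have := oE_pow (k := k) (N := n ^ 2) b 0 a
  rw [zero_add] at this
  rw [← this, ← Module.End.mul_apply, (hc.pow_right b).eq, Module.End.mul_apply, oF_pow0 H, vb_out (by omega)]
  simp

lemma o_EN (n : ℕ) : oE k (n ^ 2) ^ (n ^ 2) = 0 := by
  refine op_ext fun b a _ => ?_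
  rw [oE_pow, vb_out (by omega)]; simp

lemma o_top (H : Hyp n q) (lam : k) :
    (oF (n ^ 2) q lam ^ (n ^ 2 - 1)) (vb k (n ^ 2) (n ^ 2 - 1) 0) ≠ 0 := by
  have h0 := H.q_ne
  have hN : 0 < n ^ 2 := Nat.pos_of_ne_zero (by have := H.hn; positivity)
  let π : Module.End k ((Fin (n ^ 2) × Fin (n ^ 2)) →₀ k) := dg fun b _ => if b = n ^ 2 - 1 then 1 else 0
  let G : Module.End k ((Fin (n ^ 2) × Fin (n ^ 2)) →₀ k) := op fun b a =>
    q⁻¹ ^ (n ^ 2 - 1) • vb k (n ^ 2) b (a + 1)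
  have hG : ∀ b a, G (vb k (n ^ 2) b a) = q⁻¹ ^ (n ^ 2 - 1) • vb k (n ^ 2) b (a + 1) :=
    op_vb _ (fun b a h => by rw [vb_out (by omega), smul_zero])
  have hG' : ∀ s, ∃ c : k, c ≠ 0 ∧ (G ^ s) (vb k (n ^ 2) (n ^ 2 - 1) 0) = c • vb k (n ^ 2) (n ^ 2 - 1) s := by
    intro s
    induction s with
    | zero => exact ⟨1, one_ne_zero, by simp⟩
    | succ s ih =>
      obtain ⟨c, hc, ih⟩ := ih
      refine ⟨c * q⁻¹ ^ (n ^ 2 - 1), mul_ne_zero hc (pow_ne_zero _ (inv_ne_zero h0)), ?_⟩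
      rw [pow_succ' G, Module.End.mul_apply, ih, map_smul, hG, smul_smul]
  have hπ : SemiconjBy π (oF (n ^ 2) q lam) G := by
    show π * _ = G * π
    refine op_ext fun b a hb => ?_
    rw [Module.End.mul_apply, Module.End.mul_apply, dg_vb]
    cases b with
    | zero =>
      rw [oF_vb0 H, dg_vb, map_smul, hG]
      split_ifs with h
      · rw [← h, pow_zero]; simp
      · simp
    | succ b =>
      rw [oF_vbs H, map_add, map_smul, map_smul, dg_vb, dg_vb, map_smul, hG, if_neg (by omega : ¬ b = n ^ 2 - 1)]
      split_ifs with h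
      · rw [← h]; simp
      · simp
  intro h
  have h2 := congrArg π h
  rw [← Module.End.mul_apply, (hπ.pow_right _).eq, Module.End.mul_apply, dg_vb, if_pos rfl, one_smul, map_zero] at h2
  obtain ⟨c, hc, h3⟩ := hG' (n ^ 2 - 1)
  rw [h3] at h2
  exact (smul_ne_zero hc (vb_ne (by omega))) h2

/-- the big module -/
lemma exists_rep (H : Hyp n q) {lam tau : k} (hl : lam ^ (n ^ 2 / 2) = 1) (ht : tau ^ 2 = 1) :
    ∃ (V : Type) (_ : AddCommGroup V) (_ : Module k V) (_ : Module (U k n q) V)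
      (_ : IsScalarTower k (U k n q) V) (v : V), Wt n q lam tau v ∧
      gE ^ (n ^ 2 - 1) • gF ^ (n ^ 2 - 1) • v ≠ 0 ∧ gF ^ (n ^ 2 - 1) • gE ^ (n ^ 2 - 1) • v ≠ 0 := by
  have h0 := H.q_ne
  obtain ⟨m, hm, hm1, hm2, hm3, hm4⟩ := H.half
  have hN : 0 < n ^ 2 := Nat.pos_of_ne_zero (by have := H.hn; positivity)
  have hN1 : n ^ 2 - 1 + 1 = n ^ 2 := Nat.sub_add_cancel hN
  have hn1 : n - 1 + 1 = n := Nat.sub_add_cancel H.hn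
  have hkx : kx n + 2 * m = 4 * m ^ 2 := by
    have : n / 4 = m := by omega
    rw [kx, this]
    have : m ≤ m ^ 2 := Nat.le_self_pow (by norm_num) m
    omega
  obtain ⟨p, hp⟩ : ∃ p, p = kx n := ⟨_, rfl⟩
  rw [← hp] at hkx
  obtain ⟨kap, hkap⟩ : ∃ kap, kap = tau * lam ^ p := ⟨_, rfl⟩
  rw [hm4] at hl
  have hk1 : kap ^ n = 1 := by
    rw [hkap, mul_pow, hm1, pow_mul, show (4 : ℕ) = 2 * 2 by norm_num, pow_mul, ht, one_pow, one_pow, one_mul,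
      ← pow_mul]
    have : ∃ r, p * (2 * 2 * m) = 8 * m ^ 2 * r := by
      refine ⟨2 * m - 1, ?_⟩
      obtain ⟨m', rfl⟩ : ∃ m', m = m' + 1 := ⟨m - 1, by omega⟩
      have : p = 4 * (m' + 1) ^ 2 - 2 * (m' + 1) := by omega
      have : p = 2 * (m' + 1) * (2 * m' + 1) := by
        rw [this]; apply Nat.sub_eq_of_eq_add; ring
      rw [this, show 2 * (m' + 1) - 1 = 2 * m' + 1 by omega]; ring
    obtain ⟨r, hr⟩ := this
    rw [hr, pow_mul, hl, one_pow]
  have hk2 : kap ^ 2 * lam ^ n = 1 := by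
    rw [hkap, mul_pow, ht, one_mul, ← pow_mul, ← pow_add, hm1, show p * 2 + 4 * m = 8 * m ^ 2 by omega, hl]
  have hkT : kap * (kap * lam) ^ (n / 2) = tau := by
    rw [hm2, mul_pow, ← mul_assoc, ← pow_succ', hkap, mul_pow, pow_succ, pow_mul, ht, one_pow, one_mul,
      ← pow_mul, mul_assoc, ← pow_add]
    have : p * (2 * m + 1) + 2 * m = 8 * m ^ 2 * m := by
      have : (p + 2 * m) * (2 * m + 1) = 4 * m ^ 2 * (2 * m + 1) := by rw [hkx]
      nlinarith
    rw [this, pow_mul, hl, one_pow, mul_one]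
  let kk := ka n q kap
  let kh := fun b a => ka n q kap b a * mu q lam b a
  have hqn := H.qn
  have kk1 : ∀ b a, kk b a ^ n = 1 := by
    intro b a
    simp only [kk, ka]
    rw [mul_pow, mul_pow, hk1, ← pow_mul, mul_comm b, pow_mul, hqn, ← pow_mul, mul_comm a, pow_mul,
      inv_pow (q ^ n), hqn]
    simp
  have kk2 : ∀ b a, kk b a ^ 2 * mu q lam b a ^ n = 1 := by
    intro b a
    have : kk b a ^ 2 * mu q lam b a ^ n = kap ^ 2 * lam ^ n := by
      have e1 : kk b a = q ^ (n * b) * ((q ^ (n * a))⁻¹ * kap) := by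
        simp only [kk, ka, inv_pow, pow_mul]
      have e2 : mu q lam b a ^ n = ((q ^ (n * b)) ^ 2)⁻¹ * ((q ^ (n * a)) ^ 2 * lam ^ n) := by
        simp only [mu, inv_pow, mul_pow, ← pow_mul]
        rw [show 2 * b * n = n * b * 2 by ring, show 2 * a * n = n * a * 2 by ring]
      rw [e1, e2]
      field_simp
    rw [this, hk2]
  have kh1 : ∀ b a, kh b a ^ n = (kk b a ^ (n - 1)) ^ 2 := by
    intro b a
    have h1 := kk1 b a
    have h2 := kk2 b a
    have h3 : kk b a ^ (n - 1) * kk b a = 1 := by rw [← pow_succ, hn1, h1]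
    calc kh b a ^ n = kk b a ^ n * mu q lam b a ^ n := mul_pow _ _ _
      _ = (kk b a ^ (n - 1) * kk b a) ^ 2 * mu q lam b a ^ n := by rw [h1, h3]; ring
      _ = (kk b a ^ (n - 1)) ^ 2 * (kk b a ^ 2 * mu q lam b a ^ n) := by ring
      _ = _ := by rw [h2, mul_one]
  have kh2 : ∀ b a, kh b a ^ (n ^ 2) = 1 := by
    intro b a
    rw [pow_two, pow_mul, kh1, ← pow_mul, ← pow_mul, show (n - 1) * (2 * n) = n * ((n - 1) * 2) by ring,
      pow_mul, kk1, one_pow]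
  have kkL : ∀ b a, kk b a ^ (n - 1) * kh b a = mu q lam b a := by
    intro b a
    simp only [kh]
    rw [← mul_assoc]
    change kk b a ^ (n - 1) * kk b a * _ = _
    rw [← pow_succ, hn1, kk1, one_mul]
  have kkE : ∀ b a, kk (b + 1) a = q ^ n * kk b a := by
    intro b a; simp only [kk, ka]; ring
  have kkF : ∀ b a, kk b (a + 1) = (q ^ n)⁻¹ * kk b a := by
    intro b a; simp only [kk, ka]; ring
  have khE : ∀ b a, kh (b + 1) a = (q ^ n * (q ^ 2)⁻¹) * kh b a := by
    intro b a; simp only [kh, ka, mu, inv_pow]; field_simp; ring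
  have khF : ∀ b a, kh b (a + 1) = ((q ^ n)⁻¹ * q ^ 2) * kh b a := by
    intro b a; simp only [kh, ka, mu, inv_pow]; field_simp; ring
  have opE : ∀ (c : ℕ → ℕ → k) (r : k) (s : ℕ), (∀ b a, c (b + 1) a = r * c b a) →
      (∀ b a, c b a ^ (s + 1) = 1) → dg c * oE k (n ^ 2) * dg c ^ s = r • oE k (n ^ 2) := by
    intro c r s h1 h2
    refine op_ext fun b a _ => ?_
    rw [Module.End.mul_apply, Module.End.mul_apply, dg_pow_vb, map_smul, map_smul, oE_vb, dg_vb,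
      LinearMap.smul_apply, oE_vb, h1, smul_smul]
    congr 1
    rw [mul_left_comm, ← pow_succ, h2, mul_one]
  have opF : ∀ (c : ℕ → ℕ → k) (r r' : k) (s : ℕ), r * r' = 1 → (∀ b a, c b (a + 1) = r * c b a) →
      (∀ b a, c (b + 1) a = r' * c b a) →
      (∀ b a, c b a ^ (s + 1) = 1) → dg c * oF (n ^ 2) q lam * dg c ^ s = r • oF (n ^ 2) q lam := by
    intro c r r' s hr h1 h1' h2
    refine op_ext fun b a _ => ?_
    rw [Module.End.mul_apply, Module.End.mul_apply, dg_pow_vb, map_smul, map_smul, LinearMap.smul_apply]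
    cases b with
    | zero =>
      rw [oF_vb0 H, dg_vb, h1, smul_smul]
      congr 1
      rw [mul_left_comm, ← pow_succ, h2, mul_one]
    | succ b =>
      rw [oF_vbs H, map_add, map_smul, map_smul, dg_vb, dg_vb, h1]
      have h3 : c b a = r * c (b + 1) a := by rw [h1', ← mul_assoc, hr, one_mul]
      rw [h3, mul_smul r, mul_smul r, smul_comm _ r, smul_comm (sc _ _ _) r, ← smul_add, smul_comm _ r,
        smul_comm _ (c (b + 1) a), smul_comm _ (c (b + 1) a), ← smul_add, smul_smul (_ ^ s), ← pow_succ, h2, one_smul]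
  let φ0 : FreeAlgebra k (Fin 4) →ₐ[k] Module.End k ((Fin (n ^ 2) × Fin (n ^ 2)) →₀ k) :=
    FreeAlgebra.lift k ![dg kk, dg kh, oE k (n ^ 2), oF (n ^ 2) q lam]
  have f0 : φ0 (FreeAlgebra.ι k 0) = dg kk := by simp [φ0]
  have f1 : φ0 (FreeAlgebra.ι k 1) = dg kh := by simp [φ0]
  have f2 : φ0 (FreeAlgebra.ι k 2) = oE k (n ^ 2) := by simp [φ0]
  have f3 : φ0 (FreeAlgebra.ι k 3) = oF (n ^ 2) q lam := by simp [φ0]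
  have hrel : ∀ ⦃x y⦄, Rel k n q x y → φ0 x = φ0 y := by
    intro x y h
    cases h with
    | Kord =>
      rw [map_pow, f0, map_one]
      refine op_ext fun b a _ => ?_
      rw [dg_pow_vb, kk1, one_smul]; rfl
    | Khord =>
      rw [map_pow, map_pow, map_pow, f0, f1]
      refine op_ext fun b a _ => ?_
      rw [← pow_mul, dg_pow_vb, dg_pow_vb, kh1, pow_mul]
    | KKh =>
      rw [map_mul, map_mul, f0, f1]
      refine op_ext fun b a _ => ?_
      rw [Module.End.mul_apply, Module.End.mul_apply, dg_vb, dg_vb, map_smul, map_smul, dg_vb, dg_vb, smul_comm]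
    | KE =>
      rw [map_mul, map_mul, map_smul, map_pow, f0, f2]
      exact opE _ _ _ kkE (by rw [hn1]; exact kk1)
    | KF =>
      rw [map_mul, map_mul, map_smul, map_pow, f0, f3]
      exact opF _ _ _ _ (by field_simp) kkF kkE (by rw [hn1]; exact kk1)
    | KhE =>
      rw [map_mul, map_mul, map_smul, map_pow, f1, f2]
      exact opE _ _ _ khE (by rw [hN1]; exact kh2)
    | KhF =>
      rw [map_mul, map_mul, map_smul, map_pow, f1, f3]
      exact opF _ _ _ _ (by field_simp) khF khE (by rw [hN1]; exact kh2)
    | Enil => rw [map_pow, f2, map_zero, o_EN]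
    | Fnil => rw [map_pow, f3, map_zero, o_FN H]
    | EF =>
      rw [map_sub, map_sub, map_smul, map_mul, map_mul, map_mul, map_pow, map_one, f0, f1, f2, f3, o_EF H]
      refine (add_sub_cancel_left (G := Module.End k ((Fin (n ^ 2) × Fin (n ^ 2)) →₀ k)) _ _).trans ?_
      congr 1
      refine op_ext fun b a _ => ?_
      rw [Module.End.mul_apply, dg_vb, dg_vb, map_smul, dg_pow_vb, smul_smul, mul_comm, kkL]
  let φ : U k n q →ₐ[k] Module.End k ((Fin (n ^ 2) × Fin (n ^ 2)) →₀ k) :=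
    RingQuot.liftAlgHom k ⟨φ0, hrel⟩
  have hφ : ∀ x, φ (RingQuot.mkAlgHom k (Rel k n q) x) = φ0 x := fun x => RingQuot.liftAlgHom_mkAlgHom_apply k _ _ _
  have gK' : φ gK = dg kk := (hφ _).trans f0
  have gH' : φ gH = dg kh := (hφ _).trans f1
  have gE' : φ gE = oE k (n ^ 2) := (hφ _).trans f2
  have gF' : φ gF = oF (n ^ 2) q lam := (hφ _).trans f3
  let inst : Module (U k n q) ((Fin (n ^ 2) × Fin (n ^ 2)) →₀ k) := Module.compHom _ φ.toRingHom
  have act : ∀ (x : U k n q) (v : (Fin (n ^ 2) × Fin (n ^ 2)) →₀ k), x • v = φ x v := fun _ _ => rfl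
  refine ⟨(Fin (n ^ 2) × Fin (n ^ 2)) →₀ k, inferInstance, inferInstance, inst, ⟨fun c x v => ?_⟩,
    vb k _ 0 0, ⟨?_, ?_⟩, ?_, ?_⟩
  · rw [act, map_smul]; rfl
  · rw [act, L_eq, map_mul, map_pow, gK', gH', Module.End.mul_apply, dg_vb, map_smul, dg_pow_vb, smul_smul,
      mul_comm, kkL]
    simp [mu]
  · rw [act, T_eq, map_mul, map_pow, gK', gH', Module.End.mul_apply, dg_pow_vb, map_smul, dg_vb, smul_smul,
      mul_comm]
    simp only [kk, kh, mu, ka]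
    simp [hkT]
  · rw [act, act, map_pow, map_pow, gE', gF', oF_pow0 H, oE_pow]
    exact vb_ne (by omega)
  · rw [act, act, map_pow, map_pow, gE', gF', oE_pow, zero_add]
    exact o_top H lam

end QFL


namespace QFL

set_option linter.unusedSectionVars false
set_option linter.unusedVariables false
set_option autoImplicit false

variable {k : Type} [Field k] {n : ℕ} {q : k}

local notation "gK" => K k n q
local notation "gH" => Kh k n q
local notation "gE" => E k n q
local notation "gF" => F k n q
local notation "L" => gL k n q
local notation "T" => gT k n q

variable {V : Type} [AddCommGroup V] [Module k V] [Module (U k n q) V] [IsScalarTower k (U k n q) V]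

lemma Hyp.Npos (H : Hyp n q) : 0 < n ^ 2 := Nat.pos_of_ne_zero (by have := H.hn; positivity)

lemma Hyp.pow_eq (H : Hyp n q) (a b : ℕ) : q ^ a = q ^ b ↔ a ≡ b [MOD n ^ 2] := by
  have := isUnit_iff_ne_zero.2 H.q_ne
  rw [H.hq.eq_orderOf]
  obtain ⟨u, rfl⟩ := this
  rw [← Units.val_pow_eq_pow_val, ← Units.val_pow_eq_pow_val, Units.val_inj, pow_eq_pow_iff_modEq, orderOf_units]

lemma Hyp.pow_ne (H : Hyp n q) {a b : ℕ} (d c : ℕ) (h : a + d = b + c * n ^ 2) (h1 : 0 < d) (h2 : d < n ^ 2) :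
    q ^ a ≠ q ^ b := by
  intro h3
  have h4 : q ^ d = 1 := by
    have h5 : q ^ (a + d) = q ^ b := by rw [h, pow_add, mul_comm c, pow_mul, H.hq.pow_eq_one, one_pow, mul_one]
    rw [pow_add, h3] at h5
    exact mul_left_cancel₀ (pow_ne_zero _ H.q_ne) (h5.trans (mul_one _).symm)
  have := Nat.le_of_dvd h1 ((H.hq.pow_eq_one_iff_dvd _).1 h4)
  omega

/-- index conditions -/
structure Idx (n i j : ℕ) : Prop where
  h1 : 1 ≤ i
  h2 : i ≤ n ^ 2 / 2
  hj : j ≤ 1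

/-- coefficients of gamma -/
def dd (n : ℕ) (q : k) (i : ℕ) : ℕ → k
  | 0 => 1
  | r + 1 => -(q⁻¹ ^ r * dd n q i r / sc q r (q ^ (2 * (n ^ 2 - 2 * i + r + 1)) * q ^ (2 * i)))

/-- unnormalised gamma -/
def gam0 (k : Type) [Field k] (n : ℕ) (q : k) (i j : ℕ) : U k n q :=
  ∑ r ∈ Finset.range (2 * i - 2 + 1), dd n q i r • (E k n q ^ r • F k n q ^ (n ^ 2 - 2 * i + r) • eIdem k n q i j)

lemma Idx.le {i j : ℕ} (I : Idx n i j) : 2 * i ≤ n ^ 2 := by have := I.h2; omega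

lemma scR (H : Hyp n q) {i j : ℕ} (I : Idx n i j) {r : ℕ} (hr : r < 2 * i - 2) :
    sc q r (q ^ (2 * (n ^ 2 - 2 * i + r + 1)) * q ^ (2 * i)) ≠ 0 := by
  have := I.le
  have := I.h1
  refine sc_ne_zero H (by omega) ?_
  rw [← pow_add]
  symm
  exact H.pow_ne (2 * i - 2 - r) 2 (by omega) (by omega) (by omega)

lemma dd_ne (H : Hyp n q) {i j : ℕ} (I : Idx n i j) {r : ℕ} (hr : r ≤ 2 * i - 2) : dd n q i r ≠ 0 := by
  induction r with
  | zero => exact one_ne_zero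
  | succ r ih =>
    rw [dd]
    exact neg_ne_zero.2 (div_ne_zero (mul_ne_zero (pow_ne_zero _ (inv_ne_zero H.q_ne)) (ih (by omega)))
      (scR H I (by omega)))

lemma F_partial (H : Hyp n q) {i j : ℕ} (I : Idx n i j) {R : ℕ} (hR : R ≤ 2 * i - 2) :
    gF • ∑ r ∈ Finset.range (R + 1), dd n q i r • (gE ^ r • gF ^ (n ^ 2 - 2 * i + r) • eIdem k n q i j)
      = (q⁻¹ ^ R * dd n q i R) • (gE ^ R • gF ^ (n ^ 2 - 2 * i + R + 1) • eIdem k n q i j) := by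
  induction R with
  | zero =>
    rw [zero_add, Finset.sum_range_one]
    simp only [dd, pow_zero, one_smul, mul_one, add_zero]
    rw [← mul_smul, ← pow_succ']
  | succ R ih =>
    rw [Finset.sum_range_succ, smul_add, ih (by omega), smul_comm gF,
      FE_pow H ((e_wt H I.hj).Fpow H (n ^ 2 - 2 * i + (R + 1))) R, smul_add, ← mul_smul gF, ← pow_succ',
      smul_smul (dd n q i _), smul_smul (dd n q i _), ← add_assoc, add_right_comm, ← add_assoc, ← add_smul]
    have h := scR H I (r := R) (by omega)
    have h2 : q⁻¹ ^ R * dd n q i R + dd n q i (R + 1) * sc q R (q ^ (2 * (n ^ 2 - 2 * i + R + 1)) * q ^ (2 * i)) = 0 := by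
      rw [dd, neg_mul, div_mul_cancel₀ _ h, add_neg_cancel]
    rw [h2, zero_smul, zero_add, mul_comm]

/-- normalising constant -/
def cC (n : ℕ) (q : k) (i : ℕ) : k := q⁻¹ ^ (2 * i - 2) * dd n q i (2 * i - 2)

lemma cC_ne (H : Hyp n q) {i j : ℕ} (I : Idx n i j) : cC n q i ≠ 0 :=
  mul_ne_zero (pow_ne_zero _ (inv_ne_zero H.q_ne)) (dd_ne H I le_rfl)

lemma F_gam0 (H : Hyp n q) {i j : ℕ} (I : Idx n i j) :
    gF • gam0 k n q i j = cC n q i • gE ^ (2 * i - 2) • alpha k n q i j := by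
  have := I.le
  have := I.h1
  rw [gam0, F_partial H I le_rfl, cC, alpha, show n ^ 2 - 2 * i + (2 * i - 2) + 1 = n ^ 2 - 1 by omega, smul_eq_mul (gF ^ _)]

lemma Hyp.Neven (H : Hyp n q) : ∃ t, n ^ 2 = 2 * t := by
  obtain ⟨m, hm, h1, h2, h3, h4⟩ := H.half
  exact ⟨8 * m ^ 2, by omega⟩

lemma gam0_wt (H : Hyp n q) {i j : ℕ} (I : Idx n i j) :
    Wt n q (q ^ (2 * (n ^ 2 - 2 * i + i))) ((-1) ^ j) (gam0 k n q i j) := by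
  have h0 := H.q_ne
  refine Wt.sum _ fun r _ => Wt.smul (((e_wt H I.hj).Fpow H _).Epow H r |>.congr ?_ ?_) _
  · simp only [inv_pow]
    field_simp
    ring
  · obtain ⟨t, ht⟩ := H.Neven
    rw [← mul_assoc, ← pow_add, show r + (n ^ 2 - 2 * i + r) = 2 * (t - i + r) by omega, pow_mul]
    simp

lemma alpha_wt (H : Hyp n q) {i j : ℕ} (I : Idx n i j) :
    Wt n q (q ^ (2 * (n ^ 2 - 1) + 2 * i)) ((-1) ^ (n ^ 2 - 1 + j)) (alpha k n q i j) := by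
  have := (e_wt H I.hj (i := i)).Fpow H (n ^ 2 - 1)
  rwa [← pow_add, ← pow_add] at this

lemma F_alpha (H : Hyp n q) (i j : ℕ) : gF • alpha k n q i j = 0 := by
  rw [alpha, smul_eq_mul, ← mul_assoc, ← pow_succ', Nat.sub_add_cancel H.Npos, rel_F, zero_mul]

lemma sc_alpha (H : Hyp n q) {i j : ℕ} (I : Idx n i j) : sc q (2 * i - 2) (q ^ (2 * (n ^ 2 - 1) + 2 * i)) = 0 := by
  have := I.le
  have := I.h1
  refine sc_eq_zero H ?_
  rw [show 2 * (n ^ 2 - 1) + 2 * i = 2 * i - 2 + n ^ 2 * 2 by omega, pow_add q _ (n ^ 2 * 2), pow_mul, H.hq.pow_eq_one]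
  simp

lemma sc_alpha_ne (H : Hyp n q) {i j : ℕ} (I : Idx n i j) {s : ℕ} (hs : s < 2 * i - 2) :
    sc q s (q ^ (2 * (n ^ 2 - 1) + 2 * i)) ≠ 0 := by
  have := I.le
  have := I.h1
  have h : q ^ s ≠ q ^ (2 * i - 2) := H.pow_ne (2 * i - 2 - s) 0 (by omega) (by omega) (by omega)
  refine sc_ne_zero H (by omega) (h.trans_eq ?_)
  · rw [show 2 * (n ^ 2 - 1) + 2 * i = 2 * i - 2 + n ^ 2 * 2 by omega, pow_add q _ (n ^ 2 * 2), pow_mul, H.hq.pow_eq_one]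
    simp

/-! membership in the PBW span -/

lemma HH_E (H : Hyp n q) {h : U k n q} (hh : h ∈ HH k n q) : ∃ h' ∈ HH k n q, gE * h = h' * gE := by
  have h0 := H.q_ne
  induction hh using Submodule.span_induction with
  | mem x hx =>
    obtain ⟨c, d, rfl⟩ := hx
    have := qcomm_mul (qcomm_pow (rel_KE H) c) (qcomm_pow (rel_HE H) d)
    refine ⟨((q ^ n) ^ c * (q ^ n * (q ^ 2)⁻¹) ^ d)⁻¹ • (gK ^ c * gH ^ d), Submodule.smul_mem _ _ (HH_mem c d), ?_⟩
    rw [smul_mul_assoc, this, smul_smul, inv_mul_cancel₀, one_smul]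
    simp [h0]
  | zero => exact ⟨0, zero_mem _, by simp⟩
  | add x y _ _ h1 h2 =>
    obtain ⟨a, ha, h1⟩ := h1
    obtain ⟨b, hb, h2⟩ := h2
    exact ⟨a + b, add_mem ha hb, by rw [mul_add, add_mul, h1, h2]⟩
  | smul c x _ h =>
    obtain ⟨a, ha, h1⟩ := h
    exact ⟨c • a, Submodule.smul_mem _ _ ha, by rw [mul_smul_comm, smul_mul_assoc, h1]⟩

/-- filtered PBW span -/
def FW (k : Type) [Field k] (n : ℕ) (q : k) (s : ℕ) : Submodule k (U k n q) :=
  Submodule.span k {x | ∃ a b : ℕ, ∃ h ∈ HH k n q, a ≤ s ∧ x = F k n q ^ a * h * E k n q ^ b}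

lemma L_mem_HH : L ∈ HH k n q := by
  have := HH_mem (k := k) (n := n) (q := q) (n - 1) 1
  rwa [pow_one] at this

lemma one_mem_HH : (1 : U k n q) ∈ HH k n q := by simpa using HH_mem (k := k) (n := n) (q := q) 0 0

lemma FW_E (H : Hyp n q) {s : ℕ} {y : U k n q} (hy : y ∈ FW k n q s) : gE * y ∈ FW k n q s := by
  have h0 := H.q_ne
  induction hy using Submodule.span_induction with
  | mem x hx =>
    obtain ⟨a, b, h, hh, ha, rfl⟩ := hx
    obtain ⟨h', hh', e⟩ := HH_E H hh
    cases a with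
    | zero =>
      refine Submodule.subset_span ⟨0, b + 1, h', hh', ha, ?_⟩
      rw [pow_zero, one_mul, one_mul, ← mul_assoc, e, pow_succ', mul_assoc]
    | succ a =>
      have h1 := FE_alg h0 rel_EF (rel_LF H) a
      set z : U k n q := ((∑ t ∈ Finset.range (a + 1), q⁻¹ ^ t) • (1 : U k n q) -
        (∑ t ∈ Finset.range (a + 1), q ^ t) • L) with hz
      have hz' : z ∈ HH k n q := sub_mem (Submodule.smul_mem _ _ one_mem_HH) (Submodule.smul_mem _ _ L_mem_HH)
      have h2 : gE * gF ^ (a + 1) = q ^ (a + 1) • (gF ^ (a + 1) * gE) - q ^ (a + 1) • (gF ^ a * z) := by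
        rw [h1, smul_add, smul_smul, ← mul_pow, mul_inv_cancel₀ h0, one_pow, one_smul, add_sub_cancel_right]
      have h3 : gE * (gF ^ (a + 1) * h * gE ^ b) =
          q ^ (a + 1) • (gF ^ (a + 1) * h' * gE ^ (b + 1)) - q ^ (a + 1) • (gF ^ a * (z * h) * gE ^ b) := by
        rw [← mul_assoc, ← mul_assoc, h2, sub_mul, sub_mul, smul_mul_assoc, smul_mul_assoc, smul_mul_assoc,
          smul_mul_assoc, mul_assoc (gF ^ (a + 1)), e, pow_succ' gE]
        simp only [mul_assoc]
      rw [h3]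
      exact sub_mem (Submodule.smul_mem _ _ (Submodule.subset_span ⟨a + 1, b + 1, h', hh', ha, rfl⟩))
        (Submodule.smul_mem _ _ (Submodule.subset_span ⟨a, b, _, HH_mul hz' hh, by omega, rfl⟩))
  | zero => rw [mul_zero]; exact zero_mem _
  | add x y _ _ h1 h2 => rw [mul_add]; exact add_mem h1 h2
  | smul c x _ h => rw [mul_smul_comm]; exact Submodule.smul_mem _ _ h

lemma FW_Epow (H : Hyp n q) {s : ℕ} {y : U k n q} (hy : y ∈ FW k n q s) (r : ℕ) : gE ^ r * y ∈ FW k n q s := by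
  induction r with
  | zero => simpa using hy
  | succ r ih => rw [pow_succ' gE, mul_assoc]; exact FW_E H ih

lemma FW_pbw (H : Hyp n q) : FW k n q (n ^ 2 - 2) ≤ pbw k n q := by
  have hN := H.Npos
  refine Submodule.span_le.2 ?_
  rintro _ ⟨a, b, h, hh, ha, rfl⟩
  show _ ∈ pbw k n q
  by_cases hb : b < n ^ 2
  swap
  · rw [show b = n ^ 2 + (b - n ^ 2) by omega, pow_add, rel_E]; simp
  induction hh using Submodule.span_induction with
  | mem x hx =>
    obtain ⟨c, d, rfl⟩ := hx
    refine Submodule.subset_span ⟨a, b, c % n, d % (n ^ 2), ha, by omega, ?_, ?_, ?_⟩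
    · have := Nat.mod_lt c H.hn; omega
    · have := Nat.mod_lt d hN; omega
    · have e1 : gK ^ c = gK ^ (c % n) := K_pow_mod (Nat.mod_mod _ _).symm
      have e2 : gH ^ d = gH ^ (d % n ^ 2) := by
        conv_lhs => rw [← Nat.div_add_mod d (n ^ 2), pow_add, pow_mul, Kh_pow, one_pow, one_mul]
      rw [e1, e2]
      simp only [mul_assoc]
  | zero => simp
  | add x y _ _ h1 h2 => rw [mul_add, add_mul]; exact add_mem h1 h2
  | smul c x _ h => rw [mul_smul_comm, smul_mul_assoc]; exact Submodule.smul_mem _ _ h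

lemma gam0_pbw (H : Hyp n q) {i j : ℕ} (I : Idx n i j) : gam0 k n q i j ∈ pbw k n q := by
  have := I.le
  have := I.h1
  apply FW_pbw H
  refine Submodule.sum_mem _ fun r hr => Submodule.smul_mem _ _ (FW_Epow H ?_ r)
  rw [Finset.mem_range] at hr
  exact Submodule.subset_span ⟨n ^ 2 - 2 * i + r, 0, _, e_mem_HH i j, by omega, by simp⟩

/-! uniqueness -/

lemma HH_e' (H : Hyp n q) {h : U k n q} (hh : h ∈ HH k n q) (lam tau : k) :
    ∃ c : k, ∀ (V : Type) [AddCommGroup V] [Module k V] [Module (U k n q) V]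
      [IsScalarTower k (U k n q) V] (w : V), Wt n q lam tau w → h • w = c • w := by
  induction hh using Submodule.span_induction with
  | mem x hx =>
    obtain ⟨c, d, rfl⟩ := hx
    exact ⟨_, fun V _ _ _ _ w hw => by
      rw [mul_smul, smul_pow_eigen (hw.H H), smul_comm, smul_pow_eigen (hw.K H), smul_smul]⟩
  | zero => exact ⟨0, by simp⟩
  | add x y _ _ h1 h2 =>
    obtain ⟨c, h1⟩ := h1
    obtain ⟨d, h2⟩ := h2
    exact ⟨c + d, fun V _ _ _ _ w hw => by rw [add_smul, add_smul, h1 V w hw, h2 V w hw]⟩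
  | smul c x _ h =>
    obtain ⟨d, h⟩ := h
    exact ⟨c * d, fun V _ _ _ _ w hw => by rw [smul_assoc, h V w hw, smul_smul]⟩

lemma Hyp.wtpow (H : Hyp n q) (a : ℕ) : (q ^ (2 * a)) ^ (n ^ 2 / 2) = 1 := by
  rw [← pow_mul, show 2 * a * (n ^ 2 / 2) = 2 * (n ^ 2 / 2) * a by ring, pow_mul, H.qR, one_pow]

lemma sq_neg (a : ℕ) : ((-1 : k) ^ a) ^ 2 = 1 := by rw [← pow_mul, mul_comm, pow_mul]; simp

lemma HH_zero [CharZero k] (H : Hyp n q) {h : U k n q} (hh : h ∈ HH k n q)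
    (h1 : gF ^ (n ^ 2 - 1) * h * gE ^ (n ^ 2 - 1) = 0) : h = 0 := by
  have h0 := H.q_ne
  have hN := H.Npos
  have : ∀ i ∈ Finset.range (n ^ 2 / 2), ∀ j ∈ Finset.range 2, h * eIdem k n q (i + 1) j = 0 := by
    intro i hi j hj
    rw [Finset.mem_range] at hi hj
    obtain ⟨c, hc⟩ := HH_e' H hh (q ^ (2 * (i + 1))) ((-1) ^ j)
    obtain ⟨V, _, _, _, _, v, hv, -, hne⟩ := exists_rep H (H.wtpow (n ^ 2 - 1 + (i + 1)))
      (sq_neg (k := k) (n ^ 2 - 1 + j))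
    have hw : Wt n q (q ^ (2 * (i + 1))) ((-1) ^ j) (gE ^ (n ^ 2 - 1) • v) := by
      refine (hv.Epow H (n ^ 2 - 1)).congr ?_ ?_
      · rw [mul_add 2, pow_add q, ← mul_assoc, ← mul_pow, inv_mul_cancel₀ h0, one_pow, one_mul]
      · rw [pow_add, ← mul_assoc, ← pow_two, sq_neg, one_mul]
    have hcw := hc V _ hw
    have h2 : (gF ^ (n ^ 2 - 1) * h * gE ^ (n ^ 2 - 1)) • v = 0 := by rw [h1, zero_smul]
    rw [mul_smul, mul_smul, hcw, smul_comm] at h2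
    have hc0 : c = 0 := (smul_eq_zero.1 h2).resolve_right hne
    have := hc (U k n q) _ (e_wt H (i := i + 1) (j := j) (by omega))
    rw [hc0, zero_smul] at this
    exact this
  rw [← mul_one h, ← sum_e H, Finset.mul_sum]
  refine Finset.sum_eq_zero fun i hi => ?_
  rw [Finset.mul_sum]
  exact Finset.sum_eq_zero fun j hj => this i hi j hj

/-- elements of the PBW span in expanded form -/
lemma pbw_expand (H : Hyp n q) {y : U k n q} (hy : y ∈ pbw k n q) : ∃ h : ℕ → ℕ → U k n q,
    (∀ a b, h a b ∈ HH k n q) ∧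
    y = ∑ a ∈ Finset.range (n ^ 2 - 1), gF ^ a * ∑ b ∈ Finset.range (n ^ 2), h a b * gE ^ b := by
  have hN := H.Npos
  obtain ⟨m, hm, hm1, hm2, hm3, hm4⟩ := H.half
  have hm5 : 0 < m ^ 2 := by positivity
  induction hy using Submodule.span_induction with
  | mem x hx =>
    obtain ⟨a, b, c, d, ha, hb, hc, hd, rfl⟩ := hx
    refine ⟨fun a' b' => if a' = a ∧ b' = b then gK ^ c * gH ^ d else 0, ?_, ?_⟩
    · intro a' b'
      dsimp only
      split_ifs
      · exact HH_mem _ _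
      · exact zero_mem _
    · rw [Finset.sum_eq_single_of_mem a (Finset.mem_range.2 (by omega)),
        Finset.sum_eq_single_of_mem b (Finset.mem_range.2 (by omega))]
      · dsimp only; rw [if_pos ⟨rfl, rfl⟩]; simp only [mul_assoc]
      · intro b' _ h; dsimp only; rw [if_neg (by tauto), zero_mul]
      · intro a' _ h
        rw [Finset.sum_eq_zero, mul_zero]
        intro b' _; dsimp only; rw [if_neg (by tauto), zero_mul]
  | zero => exact ⟨0, fun _ _ => zero_mem _, by simp⟩
  | add x y _ _ h1 h2 =>
    obtain ⟨h, hh, rfl⟩ := h1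
    obtain ⟨h', hh', rfl⟩ := h2
    refine ⟨h + h', fun a b => add_mem (hh a b) (hh' a b), ?_⟩
    simp only [Pi.add_apply, add_mul, Finset.sum_add_distrib, mul_add]
  | smul c x _ h =>
    obtain ⟨h, hh, rfl⟩ := h
    refine ⟨c • h, fun a b => Submodule.smul_mem _ _ (hh a b), ?_⟩
    simp only [Pi.smul_apply, smul_mul_assoc, ← Finset.smul_sum, mul_smul_comm]

lemma pbw_inj [CharZero k] (H : Hyp n q) {y : U k n q} (hy : y ∈ pbw k n q) (h1 : gF * y = 0) : y = 0 := by
  have hN := H.Npos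
  obtain ⟨h, hh, rfl⟩ := pbw_expand H hy
  have key : ∀ a, a < n ^ 2 - 1 → ∑ b ∈ Finset.range (n ^ 2), h a b * gE ^ b = 0 := by
    intro a
    induction a using Nat.strong_induction_on with
    | _ a ih =>
      intro ha
      have h2 : gF ^ (n ^ 2 - 2 - a) * (gF * ∑ a ∈ Finset.range (n ^ 2 - 1), gF ^ a * ∑ b ∈ Finset.range (n ^ 2), h a b * gE ^ b)
        = 0 := by rw [h1, mul_zero]
      rw [← mul_assoc, ← pow_succ, Finset.mul_sum, Finset.sum_eq_single_of_mem a (Finset.mem_range.2 ha)] at h2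
      · rw [← mul_assoc, ← pow_add, show n ^ 2 - 2 - a + 1 + a = n ^ 2 - 1 by omega] at h2
        have key2 : ∀ b, b < n ^ 2 → h a b = 0 := by
          intro b
          induction b using Nat.strong_induction_on with
          | _ b ih =>
            intro hb
            apply HH_zero H (hh a b)
            have h3 := congrArg (· * gE ^ (n ^ 2 - 1 - b)) h2
            simp only [zero_mul] at h3
            rw [mul_assoc, Finset.sum_mul, Finset.sum_eq_single_of_mem b (Finset.mem_range.2 hb)] at h3
            · rw [mul_assoc, ← pow_add, show b + (n ^ 2 - 1 - b) = n ^ 2 - 1 by omega, ← mul_assoc] at h3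
              exact h3
            · intro b' hb' hne
              rw [Finset.mem_range] at hb'
              rcases lt_or_gt_of_ne hne with h4 | h4
              · rw [ih b' h4 (by omega)]; simp
              · rw [mul_assoc, ← pow_add, show b' + (n ^ 2 - 1 - b) = n ^ 2 + (b' - b - 1) by omega, pow_add, rel_E]
                simp
        refine Finset.sum_eq_zero fun b hb => ?_
        rw [key2 b (Finset.mem_range.1 hb), zero_mul]
      · intro a' ha' hne
        rw [Finset.mem_range] at ha'
        rcases lt_or_gt_of_ne hne with h4 | h4
        · rw [ih a' h4 (by omega)]; simp
        · rw [← mul_assoc, ← pow_add, show n ^ 2 - 2 - a + 1 + a' = n ^ 2 + (a' - a - 1) by omega, pow_add, rel_F]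
          simp
  refine Finset.sum_eq_zero fun a ha => ?_
  rw [key a (Finset.mem_range.1 ha), mul_zero]

lemma gam_eq [CharZero k] (H : Hyp n q) {i j : ℕ} (I : Idx n i j) :
    gam k n q i j = (cC n q i)⁻¹ • gam0 k n q i j := by
  have hC := cC_ne H I
  have h1 : (cC n q i)⁻¹ • gam0 k n q i j ∈ pbw k n q ∧ gF * ((cC n q i)⁻¹ • gam0 k n q i j) = beta k n q i j := by
    refine ⟨Submodule.smul_mem _ _ (gam0_pbw H I), ?_⟩
    have := F_gam0 H I
    rw [smul_eq_mul] at this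
    rw [mul_smul_comm, this, smul_smul _, inv_mul_cancel₀ hC, one_smul]
    rfl
  have hex : ∃! x, x ∈ pbw k n q ∧ gF * x = beta k n q i j := by
    refine ⟨_, h1, ?_⟩
    rintro y ⟨hy1, hy2⟩
    apply sub_eq_zero.1
    apply pbw_inj H (sub_mem hy1 h1.1)
    rw [mul_sub, hy2, h1.2, sub_self]
  rw [gam, dif_pos hex]
  exact hex.unique hex.choose_spec.1 h1

lemma P_eq [CharZero k] (H : Hyp n q) {i j : ℕ} (I : Idx n i j) :
    P k n q i j = Submodule.span (U k n q) {gam0 k n q i j} := by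
  have hC := cC_ne H I
  rw [P, gam_eq H I]
  apply le_antisymm
  · rw [Submodule.span_singleton_le_iff_mem]
    rw [← algebraMap_smul (U k n q)]
    exact Submodule.smul_mem _ _ (Submodule.mem_span_singleton_self _)
  · rw [Submodule.span_singleton_le_iff_mem]
    have : gam0 k n q i j = algebraMap k (U k n q) (cC n q i) • ((cC n q i)⁻¹ • gam0 k n q i j) := by
      rw [algebraMap_smul, smul_smul _, mul_inv_cancel₀ hC, one_smul]
    rw [this]
    exact Submodule.smul_mem _ _ (by rw [← this]; exact Submodule.mem_span_singleton_self _)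

end QFL


namespace QFL

set_option linter.unusedSectionVars false
set_option linter.unusedVariables false
set_option autoImplicit false

variable {k : Type} [Field k] {n : ℕ} {q : k}

local notation "gK" => K k n q
local notation "gH" => Kh k n q
local notation "gE" => E k n q
local notation "gF" => F k n q
local notation "L" => gL k n q
local notation "T" => gT k n q

variable {V : Type} [AddCommGroup V] [Module k V] [Module (U k n q) V] [IsScalarTower k (U k n q) V]

open Polynomial

lemma Epow_mem (H : Hyp n q) (N : Submodule (U k n q) V) {lam tau : k} {v : V} (h : Wt n q lam tau v)
    (hF : gF • v = 0) {b : ℕ} (hs : ∀ s < b, sc q s lam ≠ 0) (hb : gE ^ b • v ∈ N) : v ∈ N := by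
  have h1 := N.smul_mem (gF ^ b) hb
  rw [FpowEpow H h hF] at h1
  have h2 : (∏ t ∈ Finset.range b, sc q t lam) ≠ 0 :=
    Finset.prod_ne_zero_iff.2 fun t ht => hs t (Finset.mem_range.1 ht)
  have h3 := N.smul_of_tower_mem (∏ t ∈ Finset.range b, sc q t lam)⁻¹ h1
  rwa [smul_smul, inv_mul_cancel₀ h2, one_smul] at h3

/-- The abstract description of the module `P`. -/
structure PD (n : ℕ) (q : k) (i j : ℕ) (V : Type) [AddCommGroup V] [Module k V] [Module (U k n q) V] (a g : V) :
    Prop where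
  wa : Wt n q (q ^ (2 * (n ^ 2 - 1) + 2 * i)) ((-1) ^ (n ^ 2 - 1 + j)) a
  wg : Wt n q (q ^ (2 * (n ^ 2 - 2 * i + i))) ((-1) ^ j) g
  Fa : F k n q • a = 0
  Fg : F k n q • g = cC n q i • E k n q ^ (2 * i - 2) • a
  span : ∀ x : V, ∃ f h : k[X], x = pE n q f • a + pE n q h • g
  gen : ∀ x : V, ∃ u : U k n q, x = u • g
  ind : ∀ f h : k[X], pE n q f • a + pE n q h • g = 0 → X ^ (n ^ 2) ∣ f ∧ X ^ (n ^ 2) ∣ h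

lemma pE_one : pE n q 1 = 1 := map_one _

lemma pE_X_dvd {f : k[X]} (h : X ^ (n ^ 2) ∣ f) : pE n q f = 0 := by
  obtain ⟨g, rfl⟩ := h
  rw [pE_mul]
  have : pE n q (X ^ n ^ 2) = 0 := by rw [pE, map_pow, aeval_X, rel_E]
  rw [this, zero_mul]

lemma PD.full (H : Hyp n q) {i j : ℕ} (I : Idx n i j) {a g : V} (D : PD n q i j V a g)
    (N : Submodule (U k n q) V) {f h : k[X]} (hm : pE n q f • a + pE n q h • g ∈ N) (h0 : h.coeff 0 ≠ 0) :
    N = ⊤ := by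
  have hc : IsCoprime X h := by
    rw [Polynomial.irreducible_X.coprime_iff_not_dvd, Polynomial.X_dvd_iff]
    exact h0
  obtain ⟨x, y, hxy⟩ := hc.pow_left (m := n ^ 2)
  have hy : pE n q y * pE n q h = 1 := by
    rw [← pE_mul, ← pE_one, ← hxy, pE_add, pE_X_dvd (Dvd.intro_left x rfl), zero_add]
  have h1 := N.smul_mem (pE n q y) hm
  rw [smul_add, ← mul_smul, ← mul_smul, hy, one_smul, ← pE_mul] at h1
  set f' := y * f
  have h2 := N.smul_mem gF h1
  obtain ⟨g1, g2, e1, e2⟩ := pE_F H D.wa f'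
  rw [smul_add, e1, D.Fa, smul_zero, zero_add, D.Fg, ← smul_assoc, ← pE_monomial, ← add_smul, ← pE_add] at h2
  set p := g1 + monomial (2 * i - 2) (cC n q i) with hp
  have hpD : p.coeff (2 * i - 2) ≠ 0 := by
    rw [hp, coeff_add, e2, sc_alpha H I, zero_mul, zero_add, coeff_monomial, if_pos rfl]
    exact cC_ne H I
  classical
  have hex : ∃ b, p.coeff b ≠ 0 := ⟨_, hpD⟩
  have h3 := pE_unit H N p a (Nat.find hex) (fun c hc => not_not.1 (Nat.find_min hex hc)) (Nat.find_spec hex) h2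
  have hle : Nat.find hex ≤ 2 * i - 2 := Nat.find_min' hex hpD
  have ha : a ∈ N := Epow_mem H N D.wa D.Fa (fun s hs => sc_alpha_ne H I (by omega)) h3
  have hg : g ∈ N := by
    have := N.sub_mem h1 (N.smul_mem (pE n q f') ha)
    rwa [add_sub_cancel_left] at this
  rw [eq_top_iff]
  intro x _
  obtain ⟨u, rfl⟩ := D.gen x
  exact N.smul_mem _ hg

lemma PD.not_dvd (H : Hyp n q) {p : k[X]} (h0 : p.coeff 0 ≠ 0) : ¬ X ^ (n ^ 2) ∣ p := by
  intro h
  exact h0 (X_pow_dvd_iff.1 h 0 H.Npos)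

lemma PD.local_ (H : Hyp n q) {i j : ℕ} (I : Idx n i j) {a g : V} (D : PD n q i j V a g)
    (N1 N2 : Submodule (U k n q) V) (h : N1 ⊔ N2 = ⊤) : N1 = ⊤ ∨ N2 = ⊤ := by
  have hg : g ∈ N1 ⊔ N2 := by rw [h]; trivial
  obtain ⟨x, hx, y, hy, hxy⟩ := Submodule.mem_sup.1 hg
  obtain ⟨f1, h1, rfl⟩ := D.span x
  obtain ⟨f2, h2, rfl⟩ := D.span y
  by_cases c1 : h1.coeff 0 = 0
  · by_cases c2 : h2.coeff 0 = 0
    · exfalso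
      have : pE n q (f1 + f2) • a + pE n q (h1 + h2 + (-1)) • g = 0 := by
        rw [pE_add, pE_add, pE_add, show pE n q (-1) = -1 by rw [pE, map_neg, map_one]]
        simp only [add_smul, neg_smul, one_smul]
        have h5 := sub_eq_zero.2 hxy
        refine Eq.trans ?_ h5
        abel
      refine PD.not_dvd H ?_ (D.ind _ _ this).2
      simp [c1, c2]
    · exact Or.inr (D.full H I N2 hy c2)
  · exact Or.inl (D.full H I N1 hx c1)

lemma PD.span_a (H : Hyp n q) {i j : ℕ} (I : Idx n i j) {a g : V} (D : PD n q i j V a g) :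
    Submodule.span (U k n q) {a} ≠ ⊤ := by
  intro h
  have hg : g ∈ Submodule.span (U k n q) {a} := by rw [h]; trivial
  obtain ⟨u, hu⟩ := Submodule.mem_span_singleton.1 hg
  obtain ⟨f, hf⟩ := low_span H D.wa D.Fa u
  have : pE n q f • a + pE n q (-1) • g = 0 := by
    rw [← hf, hu, show pE n q (-1) = -1 by rw [pE, map_neg, map_one]]; simp
  refine PD.not_dvd H ?_ (D.ind _ _ this).2
  simp

lemma PD.g_ne (H : Hyp n q) {i j : ℕ} (I : Idx n i j) {a g : V} (D : PD n q i j V a g) : g ≠ 0 := by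
  intro h
  have : pE n q 0 • a + pE n q 1 • g = 0 := by rw [h]; simp [pE]
  exact PD.not_dvd H (by simp) (D.ind _ _ this).2

lemma PD.indec (H : Hyp n q) {i j : ℕ} (I : Idx n i j) {a g : V} (D : PD n q i j V a g) :
    IsIndecomposable (U k n q) V := by
  refine ⟨⟨g, 0, D.g_ne H I⟩, fun N1 N2 h => ?_⟩
  rcases D.local_ H I N1 N2 h.sup_eq_top with h1 | h1
  · right
    have := h.inf_eq_bot
    rwa [h1, top_inf_eq] at this
  · left
    have := h.inf_eq_bot
    rwa [h1, inf_top_eq] at this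

lemma PD.simple_low (H : Hyp n q) {i j : ℕ} (I : Idx n i j) {a g : V} (D : PD n q i j V a g)
    {S : Type} [AddCommGroup S] [Module k S] [Module (U k n q) S] [IsScalarTower k (U k n q) S]
    [IsSimpleModule (U k n q) S] (π : V →ₗ[U k n q] S) (hπ : Function.Surjective π) :
    π g ≠ 0 ∧ gF • π g = 0 ∧ Wt n q (q ^ (2 * (n ^ 2 - 2 * i + i))) ((-1) ^ j) (π g) := by
  have hnt : Nontrivial S := IsSimpleModule.nontrivial (U k n q) S
  have hk : ∀ (c : k) (x : V), π (c • x) = c • π x := fun c x => by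
    rw [← algebraMap_smul (U k n q) c x, map_smul, algebraMap_smul]
  have hg : π g ≠ 0 := by
    intro h
    obtain ⟨s, hs⟩ := exists_ne (0 : S)
    obtain ⟨x, rfl⟩ := hπ s
    obtain ⟨u, rfl⟩ := D.gen x
    exact hs (by rw [map_smul, h, smul_zero])
  have ha : π a = 0 := by
    by_contra hne
    have h1 : Submodule.span (U k n q) {π a} = ⊤ := IsSimpleModule.span_singleton_eq_top (U k n q) hne
    have h2 : π g ∈ Submodule.span (U k n q) {π a} := by rw [h1]; trivial
    obtain ⟨u, hu⟩ := Submodule.mem_span_singleton.1 h2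
    have h3 : Submodule.span (U k n q) {a} ⊔ LinearMap.ker π = ⊤ := by
      rw [eq_top_iff]
      intro x _
      obtain ⟨w, rfl⟩ := D.gen x
      apply Submodule.smul_mem
      refine Submodule.mem_sup.2 ⟨u • a, Submodule.smul_mem _ _ (Submodule.mem_span_singleton_self _), g - u • a, ?_, by abel⟩
      rw [LinearMap.mem_ker, map_sub, map_smul, hu, sub_self]
    rcases D.local_ H I _ _ h3 with h4 | h4
    · exact D.span_a H I h4
    · apply hg
      have : g ∈ LinearMap.ker π := by rw [h4]; trivial
      exact this
  refine ⟨hg, ?_, ?_, ?_⟩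
  · rw [← map_smul, D.Fg, hk, map_smul, ha, smul_zero, smul_zero]
  · rw [← map_smul, D.wg.hL, hk]
  · rw [← map_smul, D.wg.hT, hk]

/-- the key computation -/
lemma key_low [CharZero k] (H : Hyp n q) {i j : ℕ} (I : Idx n i j) {v : V} (hF : gF • v = 0)
    (hv : Wt n q (q ^ (2 * (n ^ 2 - 2 * i + i))) ((-1) ^ j) v) :
    ∃ c : k, c ≠ 0 ∧ gam0 k n q i j • gE ^ (n ^ 2 - 2 * i) • v = c • v := by
  have h0 := H.q_ne
  have := I.le
  have := I.h1
  refine ⟨∏ t ∈ Finset.range (n ^ 2 - 2 * i), sc q t (q ^ (2 * (n ^ 2 - 2 * i + i))), ?_, ?_⟩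
  · refine Finset.prod_ne_zero_iff.2 fun s hs => ?_
    rw [Finset.mem_range] at hs
    have h : q ^ s ≠ q ^ (n ^ 2 - 2 * i) := H.pow_ne (n ^ 2 - 2 * i - s) 0 (by omega) (by omega) (by omega)
    refine sc_ne_zero H (by omega) (h.trans_eq ?_)
    rw [show 2 * (n ^ 2 - 2 * i + i) = n ^ 2 - 2 * i + n ^ 2 by omega, pow_add, H.hq.pow_eq_one, mul_one]
  · have hw : Wt n q (q ^ (2 * i)) ((-1) ^ j) (gE ^ (n ^ 2 - 2 * i) • v) := by
      refine (hv.Epow H _).congr ?_ ?_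
      · rw [mul_add 2, pow_add q, ← mul_assoc, ← mul_pow, inv_mul_cancel₀ h0, one_pow, one_mul]
      · obtain ⟨t, ht⟩ := H.Neven
        rw [show n ^ 2 - 2 * i = 2 * (t - i) by omega, pow_mul]; simp
    rw [gam0, Finset.sum_smul, Finset.sum_range_succ']
    have hz : ∀ r ∈ Finset.range (2 * i - 2), (dd n q i (r + 1) • (gE ^ (r + 1) • gF ^ (n ^ 2 - 2 * i + (r + 1)) • eIdem k n q i j)) •
        gE ^ (n ^ 2 - 2 * i) • v = 0 := by
      intro r _
      rw [smul_assoc, smul_eq_mul, smul_eq_mul, mul_smul, mul_smul, e_act H I.hj hw, FpowEpow_zero H hv hF,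
        smul_zero, smul_zero]
    rw [Finset.sum_eq_zero hz, zero_add, smul_assoc, smul_eq_mul, smul_eq_mul, mul_smul, mul_smul,
      e_act H I.hj hw, add_zero, FpowEpow H hv hF]
    simp [dd]

/-- independence -/
lemma pE_ind (H : Hyp n q) {f : k[X]} {w : V} (h1 : gE ^ (n ^ 2 - 1) • w ≠ 0) (h2 : pE n q f • w = 0) :
    X ^ (n ^ 2) ∣ f := by
  classical
  by_contra hcon
  rw [X_pow_dvd_iff] at hcon
  push Not at hcon
  have h3 := pE_unit_zero H f w (Nat.find hcon) ?_ (Nat.find_spec hcon).2 h2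
  · have hlt := (Nat.find_spec hcon).1
    apply h1
    rw [show n ^ 2 - 1 = (n ^ 2 - 1 - Nat.find hcon) + Nat.find hcon by omega, pow_add gE, mul_smul, h3, smul_zero]
  · intro c hc
    have := Nat.find_min hcon hc
    push Not at this
    exact this (hc.trans (Nat.find_spec hcon).1)

lemma U_ind [CharZero k] (H : Hyp n q) {i j : ℕ} (I : Idx n i j) (f h : k[X])
    (e : pE n q f • alpha k n q i j + pE n q h • gam0 k n q i j = 0) :
    X ^ (n ^ 2) ∣ f ∧ X ^ (n ^ 2) ∣ h := by
  have h0 := H.q_ne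
  have := I.le
  have := I.h1
  have hh : X ^ (n ^ 2) ∣ h := by
    obtain ⟨t, ht⟩ := H.Neven
    obtain ⟨V, _, _, _, _, v, hv, hne, -⟩ := exists_rep H (H.wtpow (n ^ 2 - (2 * i - 1) + i)) (sq_neg (k := k) (1 + j))
    have hw : Wt n q (q ^ (2 * i)) ((-1) ^ j) (gF ^ (2 * i - 1) • v) := by
      refine (hv.Fpow H _).congr ?_ ?_
      · rw [← pow_add, show 2 * (2 * i - 1) + 2 * (n ^ 2 - (2 * i - 1) + i) = n ^ 2 * 2 + 2 * i by omega, pow_add q, pow_mul,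
          H.hq.pow_eq_one]
        simp
      · rw [← pow_add, show 2 * i - 1 + (1 + j) = 2 * i + j by omega, pow_add, pow_mul]; simp
    have ha : alpha k n q i j • gF ^ (2 * i - 1) • v = 0 := by
      rw [alpha, mul_smul, e_act H I.hj hw, ← mul_smul, ← pow_add,
        show n ^ 2 - 1 + (2 * i - 1) = n ^ 2 + (2 * i - 2) by omega, pow_add, rel_F]
      simp
    have hg : gam0 k n q i j • gF ^ (2 * i - 1) • v = gF ^ (n ^ 2 - 1) • v := by
      rw [gam0, Finset.sum_smul, Finset.sum_range_succ']
      have hz : ∀ r ∈ Finset.range (2 * i - 2), (dd n q i (r + 1) • (gE ^ (r + 1) • gF ^ (n ^ 2 - 2 * i + (r + 1)) • eIdem k n q i j)) •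
          gF ^ (2 * i - 1) • v = 0 := by
        intro r _
        rw [smul_assoc, smul_eq_mul, smul_eq_mul, mul_smul, mul_smul, e_act H I.hj hw, ← mul_smul (gF ^ _), ← pow_add,
          show n ^ 2 - 2 * i + (r + 1) + (2 * i - 1) = n ^ 2 + r by omega, pow_add gF, rel_F]
        simp
      rw [Finset.sum_eq_zero hz, zero_add, smul_assoc, smul_eq_mul, smul_eq_mul, mul_smul, mul_smul,
        e_act H I.hj hw, add_zero, ← mul_smul (gF ^ _), ← pow_add, show n ^ 2 - 2 * i + (2 * i - 1) = n ^ 2 - 1 by omega]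
      simp [dd]
    have e2 := congrArg (· • gF ^ (2 * i - 1) • v) e
    simp only [zero_smul, add_smul] at e2
    rw [smul_eq_mul, smul_eq_mul, mul_smul, mul_smul, ha, hg, smul_zero, zero_add] at e2
    exact pE_ind H hne e2
  refine ⟨?_, hh⟩
  rw [pE_X_dvd hh, zero_smul, add_zero] at e
  obtain ⟨V, _, _, _, _, v, hv, hne, -⟩ := exists_rep H (H.wtpow i) (sq_neg (k := k) j)
  have e2 := congrArg (· • v) e
  simp only [zero_smul] at e2
  rw [smul_eq_mul, alpha, mul_smul, mul_smul, e_act H I.hj hv] at e2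
  exact pE_ind H hne e2

lemma alpha_mem [CharZero k] (H : Hyp n q) {i j : ℕ} (I : Idx n i j) : alpha k n q i j ∈ P k n q i j := by
  have hC := cC_ne H I
  rw [P_eq H I]
  set N := Submodule.span (U k n q) {gam0 k n q i j}
  have h1 : gF • gam0 k n q i j ∈ N := N.smul_mem _ (Submodule.mem_span_singleton_self _)
  rw [F_gam0 H I] at h1
  have h3 := N.smul_of_tower_mem (cC n q i)⁻¹ h1
  rw [smul_smul (cC n q i)⁻¹, inv_mul_cancel₀ hC, one_smul] at h3
  exact Epow_mem H N (alpha_wt H I) (F_alpha H i j) (fun s hs => sc_alpha_ne H I hs) h3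

lemma gam0_mem [CharZero k] (H : Hyp n q) {i j : ℕ} (I : Idx n i j) : gam0 k n q i j ∈ P k n q i j := by
  rw [P_eq H I]; exact Submodule.mem_span_singleton_self _

lemma P_poly [CharZero k] (H : Hyp n q) {i j : ℕ} (I : Idx n i j) (x : U k n q) :
    x ∈ P k n q i j ↔ ∃ f h : k[X], x = pE n q f • alpha k n q i j + pE n q h • gam0 k n q i j := by
  constructor
  · intro hx
    rw [P_eq H I] at hx
    obtain ⟨u, rfl⟩ := Submodule.mem_span_singleton.1 hx
    exact polySpan_stable H (alpha_wt H I) (gam0_wt H I) (F_alpha H i j)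
      ⟨monomial (2 * i - 2) (cC n q i), by rw [F_gam0 H I, pE_monomial, smul_assoc]⟩ u (gam0 k n q i j)
      ⟨0, 1, by simp [pE]⟩
  · rintro ⟨f, h, rfl⟩
    exact add_mem (Submodule.smul_mem _ _ (alpha_mem H I)) (Submodule.smul_mem _ _ (gam0_mem H I))

lemma P_PD [CharZero k] (H : Hyp n q) {i j : ℕ} (I : Idx n i j) :
    PD n q i j (P k n q i j) ⟨_, alpha_mem H I⟩ ⟨_, gam0_mem H I⟩ := by
  refine ⟨⟨?_, ?_⟩, ⟨?_, ?_⟩, ?_, ?_, ?_, ?_, ?_⟩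
  · exact Subtype.ext (alpha_wt H I).hL
  · exact Subtype.ext (alpha_wt H I).hT
  · exact Subtype.ext (gam0_wt H I).hL
  · exact Subtype.ext (gam0_wt H I).hT
  · exact Subtype.ext (F_alpha H i j)
  · exact Subtype.ext (F_gam0 H I)
  · rintro ⟨x, hx⟩
    obtain ⟨f, h, e⟩ := (P_poly H I x).1 hx
    exact ⟨f, h, Subtype.ext e⟩
  · rintro ⟨x, hx⟩
    have hx' := hx
    rw [P_eq H I] at hx'
    obtain ⟨u, e⟩ := Submodule.mem_span_singleton.1 hx'
    exact ⟨u, Subtype.ext e.symm⟩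
  · intro f h e
    exact U_ind H I f h (congrArg Subtype.val e)

lemma PD.finrank [CharZero k] (H : Hyp n q) {i j : ℕ} {a g : V} (D : PD n q i j V a g) :
    FiniteDimensional k V ∧ Module.finrank k V = 2 * n ^ 2 := by
  let Φ : (degreeLT k (n ^ 2) × degreeLT k (n ^ 2)) →ₗ[k] V :=
    { toFun := fun p => pE n q p.1 • a + pE n q p.2 • g
      map_add' := fun x y => by
        simp only [Prod.fst_add, Prod.snd_add, Submodule.coe_add, pE_add, add_smul]; abel
      map_smul' := fun c x => by
        simp only [Prod.smul_fst, Prod.smul_snd, Submodule.coe_smul, pE, map_smul, smul_add, smul_assoc, RingHom.id_apply] }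
  have hinj : Function.Injective Φ := by
    rw [← LinearMap.ker_eq_bot, LinearMap.ker_eq_bot']
    rintro ⟨⟨f, hf⟩, ⟨h, hh⟩⟩ e
    obtain ⟨e1, e2⟩ := D.ind f h e
    have : ∀ p : k[X], p ∈ degreeLT k (n ^ 2) → X ^ (n ^ 2) ∣ p → p = 0 := by
      intro p hp hd
      refine Polynomial.eq_zero_of_dvd_of_degree_lt hd ?_
      rw [degree_X_pow]; exact mem_degreeLT.1 hp
    ext1 <;> apply Subtype.ext
    · exact this f hf e1
    · exact this h hh e2
  have hred : ∀ p : k[X], ∃ r ∈ degreeLT k (n ^ 2), pE n q p = pE n q r := by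
    intro p
    refine ⟨p %ₘ X ^ (n ^ 2), ?_, ?_⟩
    · rw [mem_degreeLT]
      have := degree_modByMonic_lt p (monic_X_pow (R := k) (n ^ 2))
      rwa [degree_X_pow] at this
    · conv_lhs => rw [← modByMonic_add_div p (X ^ (n ^ 2))]
      rw [pE_add, pE_X_dvd (Dvd.intro _ rfl), add_zero]
  have hsurj : Function.Surjective Φ := by
    intro x
    obtain ⟨f, h, rfl⟩ := D.span x
    obtain ⟨r, hr, e⟩ := hred f
    obtain ⟨s, hs, e'⟩ := hred h
    exact ⟨(⟨r, hr⟩, ⟨s, hs⟩), by rw [e, e']; rfl⟩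
  let e1 := (LinearEquiv.ofBijective Φ ⟨hinj, hsurj⟩).symm.trans
    ((degreeLTEquiv k (n ^ 2)).prodCongr (degreeLTEquiv k (n ^ 2)))
  refine ⟨Module.Finite.equiv e1.symm, ?_⟩
  rw [e1.finrank_eq]
  simp
  ring

lemma PD.proj [CharZero k] (H : Hyp n q) {i j : ℕ} (I : Idx n i j) {a g : V} (D : PD n q i j V a g)
    (ι : V →ₗ[U k n q] U k n q) (hι : ι g = gam0 k n q i j) : Module.Projective (U k n q) V := by
  obtain ⟨hfd, -⟩ := D.finrank H
  let s : U k n q →ₗ[U k n q] V := LinearMap.toSpanSingleton (U k n q) V (gE ^ (n ^ 2 - 2 * i) • g)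
  let ρ : V →ₗ[U k n q] V := s.comp ι
  let A := Submodule.span (U k n q) {a}
  have hρ : ρ g = gam0 k n q i j • gE ^ (n ^ 2 - 2 * i) • g := by
    simp only [ρ, s, LinearMap.comp_apply, hι, LinearMap.toSpanSingleton_apply]
  have hk : ∀ (c : k) (x : V), A.mkQ (c • x) = c • A.mkQ x := fun c x => rfl
  have haA : A.mkQ a = 0 := by
    rw [Submodule.mkQ_apply, Submodule.Quotient.mk_eq_zero]; exact Submodule.mem_span_singleton_self _
  obtain ⟨c, hc, e⟩ := key_low (V := V ⧸ A) H I (v := A.mkQ g)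
    (by rw [← map_smul, D.Fg, hk, map_smul, haA, smul_zero, smul_zero])
    ⟨by rw [← map_smul, D.wg.hL, hk], by rw [← map_smul, D.wg.hT, hk]⟩
  rw [← map_smul, ← map_smul, ← hρ, ← hk, ← sub_eq_zero, ← map_sub, Submodule.mkQ_apply, Submodule.Quotient.mk_eq_zero] at e
  have hsup : LinearMap.range ρ ⊔ A = ⊤ := by
    rw [eq_top_iff]
    intro x _
    obtain ⟨u, rfl⟩ := D.gen x
    apply Submodule.smul_mem
    have h1 : c • g ∈ LinearMap.range ρ ⊔ A := by
      have m1 : ρ g ∈ LinearMap.range ρ ⊔ A := Submodule.mem_sup_left (LinearMap.mem_range_self ρ g)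
      have m2 : ρ g - c • g ∈ LinearMap.range ρ ⊔ A := Submodule.mem_sup_right e
      have := Submodule.sub_mem _ m1 m2
      rwa [sub_sub_cancel] at this
    have := Submodule.smul_of_tower_mem _ c⁻¹ h1
    rwa [smul_smul, inv_mul_cancel₀ hc, one_smul] at this
  have hr : LinearMap.range ρ = ⊤ := (D.local_ H I _ _ hsup).resolve_right (D.span_a H I)
  have hsurj : Function.Surjective ρ := LinearMap.range_eq_top.1 hr
  have hinj : Function.Injective ρ := by
    have : Function.Injective (ρ.restrictScalars k) := LinearMap.injective_iff_surjective.2 hsurj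
    exact this
  let eq := LinearEquiv.ofBijective ρ ⟨hinj, hsurj⟩
  refine Module.Projective.of_split (ι.comp eq.symm.toLinearMap) s ?_
  ext x
  exact eq.apply_symm_apply x

end QFL


namespace QFL

set_option linter.unusedSectionVars false
set_option linter.unusedVariables false
set_option autoImplicit false

variable {k : Type} [Field k] {n : ℕ} {q : k}

local notation "gK" => K k n q
local notation "gH" => Kh k n q
local notation "gE" => E k n q
local notation "gF" => F k n q
local notation "L" => gL k n q
local notation "T" => gT k n q

variable {V : Type} [AddCommGroup V] [Module k V] [Module (U k n q) V] [IsScalarTower k (U k n q) V]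

open Polynomial

lemma pE_smul' (c : k) (f : k[X]) : pE n q (C c * f) = c • pE n q f := by
  rw [pE_mul, pE, aeval_C, Algebra.smul_def]

lemma low_zero (H : Hyp n q) {v : V} (hv0 : v ≠ 0) (f : k[X]) (h : pE n q f • v = 0) : f.coeff 0 = 0 := by
  by_contra hc
  have := pE_unit_zero H f v 0 (by simp) hc h
  rw [pow_zero, one_smul] at this
  exact hv0 this

lemma same_wt (H : Hyp n q) [IsSimpleModule (U k n q) V] {lam tau lam' tau' : k} {v w : V}
    (hv0 : v ≠ 0) (hw0 : w ≠ 0) (hFv : gF • v = 0) (hFw : gF • w = 0)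
    (hv : Wt n q lam tau v) (hw : Wt n q lam' tau' w) : lam = lam' ∧ tau = tau' := by
  have h1 : w ∈ Submodule.span (U k n q) {v} := by
    rw [IsSimpleModule.span_singleton_eq_top (U k n q) hv0]; trivial
  have h2 : v ∈ Submodule.span (U k n q) {w} := by
    rw [IsSimpleModule.span_singleton_eq_top (U k n q) hw0]; trivial
  obtain ⟨x, hx⟩ := Submodule.mem_span_singleton.1 h1
  obtain ⟨y, hy⟩ := Submodule.mem_span_singleton.1 h2
  obtain ⟨f, hf⟩ := low_span H hv hFv x
  obtain ⟨g, hg⟩ := low_span H hw hFw y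
  have ef : pE n q f • v = w := by rw [← hf, hx]
  have eg : pE n q g • w = v := by rw [← hg, hy]
  have hf0 : f.coeff 0 ≠ 0 := by
    intro h0
    have : pE n q (1 + C (-1) * (g * f)) • v = 0 := by
      rw [pE_add, pE_smul', pE_mul, pE_one, add_smul, one_smul, smul_assoc (-1 : k), neg_smul, one_smul, mul_smul (pE n q g), ef, eg, add_neg_cancel]
    have := low_zero H hv0 _ this
    simp [mul_coeff_zero, h0] at this
  constructor
  · obtain ⟨p, hp, hp'⟩ := pE_L H hv f
    rw [ef, hw.hL] at hp
    have : pE n q (p + C (-lam') * f) • v = 0 := by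
      rw [pE_add, pE_smul', add_smul, smul_assoc, ef, ← hp, neg_smul, add_neg_cancel]
    have := low_zero H hv0 _ this
    rw [coeff_add, coeff_C_mul, hp'] at this
    simp only [mul_zero, pow_zero, one_mul] at this
    have h3 : (lam - lam') * f.coeff 0 = 0 := by linear_combination this
    exact sub_eq_zero.1 ((mul_eq_zero.1 h3).resolve_right hf0)
  · obtain ⟨p, hp, hp'⟩ := pE_T H hv f
    rw [ef, hw.hT] at hp
    have : pE n q (p + C (-tau') * f) • v = 0 := by
      rw [pE_add, pE_smul', add_smul, smul_assoc, ef, ← hp, neg_smul, add_neg_cancel]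
    have := low_zero H hv0 _ this
    rw [coeff_add, coeff_C_mul, hp'] at this
    simp only [mul_zero, pow_zero, one_mul] at this
    have h3 : (tau - tau') * f.coeff 0 = 0 := by linear_combination this
    exact sub_eq_zero.1 ((mul_eq_zero.1 h3).resolve_right hf0)

lemma exists_coatom (hfd : FiniteDimensional k V) [Nontrivial V] :
    ∃ N : Submodule (U k n q) V, IsSimpleModule (U k n q) (V ⧸ N) := by
  have : Module.Finite (U k n q) V := Module.Finite.of_restrictScalars_finite k (U k n q) V
  obtain ⟨N, hN⟩ := IsCoatomic.exists_coatom (Submodule (U k n q) V)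
  exact ⟨N, isSimpleModule_iff_isCoatom.2 hN⟩

lemma iso_eq [CharZero k] (H : Hyp n q) {i j i' j' : ℕ} (I : Idx n i j) (I' : Idx n i' j')
    {W : Type} [AddCommGroup W] [Module k W] [Module (U k n q) W] [IsScalarTower k (U k n q) W]
    {a g : V} {a' g' : W} (D : PD n q i j V a g) (D' : PD n q i' j' W a' g')
    (e : V ≃ₗ[U k n q] W) : i = i' ∧ j = j' := by
  have hnt : Nontrivial V := (D.indec H I).1
  obtain ⟨N, hN⟩ := exists_coatom (n := n) (q := q) (D.finrank H).1
  have s1 := D.simple_low H I (S := V ⧸ N) N.mkQ N.mkQ_surjective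
  have s2 := D'.simple_low H I' (S := V ⧸ N) (N.mkQ.comp e.symm.toLinearMap) (N.mkQ_surjective.comp e.symm.surjective)
  obtain ⟨h1, h2⟩ := same_wt H s1.1 s2.1 s1.2.1 s2.2.1 s1.2.2 s2.2.2
  constructor
  · rw [H.pow_eq] at h1
    obtain ⟨t, ht⟩ := H.Neven
    have a1 := I.h1
    have a2 := I.le
    have b1 := I'.h1
    have b2 := I'.le
    have h3 : 2 * (n ^ 2 - i) ≡ 2 * (n ^ 2 - i') [MOD n ^ 2] := by
      convert h1 using 2 <;> omega
    generalize n ^ 2 = m at *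
    have h4 : (m : ℤ) ∣ ((2 * (m - i') : ℕ) : ℤ) - ((2 * (m - i) : ℕ) : ℤ) := (Nat.modEq_iff_dvd).1 h3
    have h5 : ((2 * (m - i') : ℕ) : ℤ) - ((2 * (m - i) : ℕ) : ℤ) = 2 * ((i : ℤ) - i') := by omega
    rw [h5] at h4
    have := Int.eq_zero_of_abs_lt_dvd h4 (by rw [abs_lt]; omega)
    omega
  · have a1 := I.hj
    have b1 := I'.hj
    interval_cases j <;> interval_cases j' <;> first | rfl | (exfalso; norm_num at h2)

lemma cover [CharZero k] (H : Hyp n q) {i j : ℕ} (I : Idx n i j)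
    (hp : Module.Projective (U k n q) V) (hi : IsIndecomposable (U k n q) V)
    {W : Type} [AddCommGroup W] [Module k W] [Module (U k n q) W] [IsScalarTower k (U k n q) W]
    {a g : W} (D : PD n q i j W a g) (ι : W →ₗ[U k n q] U k n q) (hι : ι g = gam0 k n q i j)
    (N : Submodule (U k n q) V) [IsSimpleModule (U k n q) (V ⧸ N)] {v : V ⧸ N} (hv0 : v ≠ 0)
    (hFv : gF • v = 0) (hv : Wt n q (q ^ (2 * (n ^ 2 - 2 * i + i))) ((-1) ^ j) v) :
    Nonempty (V ≃ₗ[U k n q] W) := by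
  have hproj : Module.Projective (U k n q) W := D.proj H I ι hι
  obtain ⟨c, hc, hcv⟩ := key_low H I hFv hv
  let θ : W →ₗ[U k n q] V ⧸ N :=
    (LinearMap.toSpanSingleton (U k n q) (V ⧸ N) (gE ^ (n ^ 2 - 2 * i) • v)).comp ι
  have hθg : θ g = c • v := by
    simp only [θ, LinearMap.comp_apply, hι, LinearMap.toSpanSingleton_apply, hcv]
  have hcv0 : c • v ≠ 0 := smul_ne_zero hc hv0
  have hθ0 : θ ≠ 0 := by
    intro h
    rw [h] at hθg
    exact hcv0 hθg.symm
  have hθ : Function.Surjective θ := LinearMap.surjective_of_ne_zero hθ0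
  obtain ⟨h, hh⟩ := Module.projective_lifting_property θ N.mkQ hθ
  have hsup : LinearMap.range h ⊔ LinearMap.ker θ = ⊤ := by
    rw [eq_top_iff]
    intro x _
    obtain ⟨y, hy⟩ := N.mkQ_surjective (θ x)
    have h1 : h y ∈ LinearMap.range h ⊔ LinearMap.ker θ := Submodule.mem_sup_left (LinearMap.mem_range_self h y)
    have h2 : x - h y ∈ LinearMap.range h ⊔ LinearMap.ker θ := by
      refine Submodule.mem_sup_right ?_
      rw [LinearMap.mem_ker, map_sub, ← LinearMap.comp_apply, hh, hy, sub_self]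
    simpa using Submodule.add_mem _ h1 h2
  have hr : LinearMap.range h = ⊤ := (D.local_ H I _ _ hsup).resolve_right
    (fun h => hθ0 (LinearMap.ker_eq_top.1 h))
  have hs : Function.Surjective h := LinearMap.range_eq_top.1 hr
  obtain ⟨s, hs'⟩ := Module.projective_lifting_property h LinearMap.id hs
  have hsx : ∀ x, h (s x) = x := fun x => LinearMap.congr_fun hs' x
  have hcompl : IsCompl (LinearMap.ker h) (LinearMap.range s) := by
    refine IsCompl.of_eq ?_ ?_
    · rw [eq_bot_iff]
      rintro x ⟨hx1, y, rfl⟩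
      have : h (s y) = 0 := hx1
      rw [hsx] at this
      rw [this, map_zero]; trivial
    · rw [eq_top_iff]
      intro x _
      refine Submodule.mem_sup.2 ⟨x - s (h x), ?_, s (h x), LinearMap.mem_range_self _ _, sub_add_cancel _ _⟩
      rw [LinearMap.mem_ker, map_sub, hsx, sub_self]
  rcases hi.2 _ _ hcompl with h1 | h1
  · exact ⟨LinearEquiv.ofBijective h ⟨LinearMap.ker_eq_bot.1 h1, hs⟩⟩
  · exfalso
    apply D.g_ne H I
    rw [← hsx g, LinearMap.range_eq_bot.1 h1]
    simp

lemma classify [CharZero k] (H : Hyp n q) (hfd : FiniteDimensional k V)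
    (hp : Module.Projective (U k n q) V) (hi : IsIndecomposable (U k n q) V) :
    ∃ i j : ℕ, 1 ≤ i ∧ i ≤ n ^ 2 / 2 ∧ j ≤ 1 ∧ Nonempty (V ≃ₗ[U k n q] (P k n q i j)) := by
  have hnt : Nontrivial V := hi.1
  obtain ⟨N, hN⟩ := exists_coatom (n := n) (q := q) hfd
  have hntS : Nontrivial (V ⧸ N) := IsSimpleModule.nontrivial (U k n q) _
  obtain ⟨m, j, m1, m2, hj, v, hv0, hFv, hv⟩ := exists_low' (V := V ⧸ N) H
  obtain ⟨i, I, hpow⟩ : ∃ i, Idx n i j ∧ q ^ (2 * m) = q ^ (2 * (n ^ 2 - 2 * i + i)) := by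
    obtain ⟨t, ht⟩ := H.Neven
    have hpos := H.Npos
    simp only [H.pow_eq]
    by_cases hm : m = n ^ 2 / 2
    · refine ⟨n ^ 2 / 2, ⟨by omega, le_rfl, hj⟩, ?_⟩
      rw [show 2 * (n ^ 2 - 2 * (n ^ 2 / 2) + n ^ 2 / 2) = 2 * m by omega]
    · refine ⟨n ^ 2 / 2 - m, ⟨by omega, by omega, hj⟩, ?_⟩
      rw [show 2 * (n ^ 2 - 2 * (n ^ 2 / 2 - m) + (n ^ 2 / 2 - m)) = 2 * m + n ^ 2 by omega]
      simp [Nat.ModEq]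
  rw [hpow] at hv
  refine ⟨i, j, I.h1, I.h2, hj, ?_⟩
  exact cover H I hp hi (P_PD H I) (P k n q i j).subtype rfl N hv0 hFv hv

end QFL

open QFL in
/-- Corollary 2.13 (a), (c): the `P_{2i,j}` form a complete list of the non-isomorphic
indecomposable projective left `ũ_q(sl₂)`-modules, and each has `k`-dimension `2n²`. -/
theorem statement9 (k : Type) [Field k] [IsAlgClosed k] [CharZero k]
    (n : ℕ) (hn : 0 < n) (h4 : 4 ∣ n) (q : k) (hq : IsPrimitiveRoot q (n ^ 2)) :
    (∀ i j : ℕ, 1 ≤ i → i ≤ n ^ 2 / 2 → j ≤ 1 →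
      Module.Projective (U k n q) (P k n q i j) ∧
      IsIndecomposable (U k n q) (P k n q i j) ∧
      Module.finrank k (P k n q i j) = 2 * n ^ 2) ∧
    (∀ i j i' j' : ℕ, 1 ≤ i → i ≤ n ^ 2 / 2 → j ≤ 1 → 1 ≤ i' → i' ≤ n ^ 2 / 2 → j' ≤ 1 →
      Nonempty ((P k n q i j) ≃ₗ[U k n q] (P k n q i' j')) → i = i' ∧ j = j') ∧
    (∀ (M : Type) (_ : AddCommGroup M) (_ : Module k M) (_ : Module (U k n q) M)
      (_ : IsScalarTower k (U k n q) M),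
      FiniteDimensional k M → Module.Projective (U k n q) M →
      IsIndecomposable (U k n q) M →
      ∃ i j : ℕ, 1 ≤ i ∧ i ≤ n ^ 2 / 2 ∧ j ≤ 1 ∧
        Nonempty (M ≃ₗ[U k n q] (P k n q i j))) := by
  have H : Hyp n q := ⟨hn, h4, hq⟩
  refine ⟨fun i j h1 h2 hj => ?_, fun i j i' j' h1 h2 hj h1' h2' hj' ⟨e⟩ => ?_,
    fun M _ _ _ _ hfd hp hi => classify H hfd hp hi⟩
  · have I : Idx n i j := ⟨h1, h2, hj⟩
    have D := P_PD H I
    exact ⟨D.proj H I (P k n q i j).subtype rfl, D.indec H I, (D.finrank H).2⟩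
  · have I : Idx n i j := ⟨h1, h2, hj⟩
    have I' : Idx n i' j' := ⟨h1', h2', hj'⟩
    exact iso_eq H I I' (P_PD H I) (P_PD H I') e
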